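/- arXiv:math/0701399 — 10 statements merged into one kernel-verified Lean document; each statement's English description precedes it below -/
import Mathlib

section
/- Let F be an associative algebra (not necessarily unital) over a field k of characteristic 0. Then for all k ≥ 1 and ℓ ≥ 1: (a) I_k^ℓ(F) ⊆ I_{k−1}^ℓ(F) and I_k^{≤ℓ}(F) ⊆ I_{k−1}^{≤ℓ}(F); (b) [F, I_{k−1}^ℓ(F)] ⊆ I_k^ℓ(F) and [F, I_{k−1}^{≤ℓ}(F)] ⊆ I_k^{≤ℓ}(F); (c) I_k^{≤ℓ+1}(F) = F·[F, I_{k−1}^{≤ℓ}(F)] + [F, I_{k−1}^{≤ℓ+1}(F)]. -/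
open Submodule TensorProduct

variable (K : Type*) [Field K]

/-- The span of all products `a * b`, `a ∈ S`, `b ∈ T` (the subspace `S·T`). -/
def pSpan {R : Type*} [NonUnitalRing R] [Module K R] (S T : Submodule K R) : Submodule K R :=
  Submodule.span K {x | ∃ a ∈ S, ∃ b ∈ T, x = a * b}

/-- The span of all commutators `a * b - b * a`, `a ∈ S`, `b ∈ T` (the subspace `[S, T]`). -/
def bSpan {R : Type*} [NonUnitalRing R] [Module K R] (S T : Submodule K R) : Submodule K R :=
  Submodule.span K {x | ∃ a ∈ S, ∃ b ∈ T, x = a * b - b * a}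

/-- The `k`-th commutator space `S^(k)`: `S^(0) = S`, `S^(k) = [S, S^(k-1)]`.
For `S = ⊤` this is the commutator space `F^(k)` of the algebra. -/
def cSp {R : Type*} [NonUnitalRing R] [Module K R] (S : Submodule K R) : ℕ → Submodule K R
  | 0 => S
  | (k+1) => bSpan K S (cSp S k)

/-- `IklS K S ℓ k` is `I_k^ℓ(R, S)`: the sum of `S^(λ₁) ⋯ S^(λ_ℓ)` over
`λ₁ + ⋯ + λ_ℓ = k`, defined via the recursion `I_k^1 = S^(k)`,
`I_k^ℓ = Σ_{0 ≤ i ≤ k} S^(i) · I_{k-i}^{ℓ-1}`.  The first argument is the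
superscript `ℓ`, the second the subscript `k`; the (unused) value at `ℓ = 0` is `⊥`.
For `S = ⊤` this is `I_k^ℓ(F)`. -/
def IklS {R : Type*} [NonUnitalRing R] [Module K R] (S : Submodule K R) :
    ℕ → ℕ → Submodule K R
  | 0, _ => ⊥
  | 1, k => cSp K S k
  | (ℓ+2), k => ∑ i ∈ Finset.range (k+1), pSpan K (cSp K S i) (IklS S (ℓ+1) (k-i))

/-- `I_k^{≤ℓ}(F) = Σ_{1 ≤ ℓ' ≤ ℓ} I_k^{ℓ'}(F)`. -/
def Ikle {R : Type*} [NonUnitalRing R] [Module K R] (ℓ k : ℕ) : Submodule K R :=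
  ∑ ℓ' ∈ Finset.Icc 1 ℓ, IklS K (⊤ : Submodule K R) ℓ' k

/-- `I_k(F) = Σ_{ℓ ≥ 1} I_k^ℓ(F)`. -/
def Ik (R : Type*) [NonUnitalRing R] [Module K R] (k : ℕ) : Submodule K R :=
  ⨆ ℓ : ℕ, IklS K (⊤ : Submodule K R) (ℓ + 1) k

/-- `g^n`: the span of all products of `n` elements of `g` (set to `⊥` for `n = 0`). -/
def gPow {R : Type*} [NonUnitalRing R] [Module K R] (g : Submodule K R) : ℕ → Submodule K R
  | 0 => ⊥
  | 1 => g
  | (n+2) => pSpan K g (gPow g (n+1))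

/-- The Lie subalgebra (under the commutator bracket) generated by a subspace `S`:
the smallest subspace containing `S` and closed under `(x, y) ↦ x * y - y * x`. -/
def lieGen {R : Type*} [NonUnitalRing R] [Module K R] (S : Submodule K R) : Submodule K R :=
  sInf {T | S ≤ T ∧ ∀ x ∈ T, ∀ y ∈ T, x * y - y * x ∈ T}

/-- The subspace `S ⊗ T` of `F ⊗[K] A`: the span of all pure tensors `f ⊗ a`
with `f ∈ S`, `a ∈ T`. -/
def tSpan {F A : Type*} [AddCommGroup F] [Module K F] [AddCommGroup A] [Module K A]
    (S : Submodule K F) (T : Submodule K A) : Submodule K (F ⊗[K] A) :=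
  Submodule.span K {z | ∃ f ∈ S, ∃ a ∈ T, z = f ⊗ₜ[K] a}

/-- The current Lie algebra `(g, A)(F)`: the Lie subalgebra of `F ⊗ A` (with the
commutator bracket) generated by `F ⊗ g`. -/
def currentLie {F A : Type*} [NonUnitalRing F] [Module K F] [SMulCommClass K F F]
    [IsScalarTower K F F] [Ring A] [Algebra K A] (g : Submodule K A) :
    Submodule K (F ⊗[K] A) :=
  lieGen K (tSpan K (⊤ : Submodule K F) g)

section helpers
variable {K}
    {F : Type*} [NonUnitalRing F] [Module K F]

theorem sumS_le {ι : Type*} (s : Finset ι) (f : ι → Submodule K F) (T : Submodule K F) :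
    ∑ i ∈ s, f i ≤ T ↔ ∀ i ∈ s, f i ≤ T := by
  classical
  induction s using Finset.induction_on with
  | empty => simp
  | insert a s ha ih => rw [Finset.sum_insert ha, Submodule.add_eq_sup, sup_le_iff, ih]; simp

theorem pS_le (S T U : Submodule K F) :
    pSpan K S T ≤ U ↔ ∀ a ∈ S, ∀ b ∈ T, a * b ∈ U := by
  unfold pSpan
  rw [Submodule.span_le]
  constructor
  · intro h a ha b hb
    exact h ⟨a, ha, b, hb, rfl⟩
  · rintro h x ⟨a, ha, b, hb, rfl⟩
    exact h a ha b hb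

theorem bS_le (S T U : Submodule K F) :
    bSpan K S T ≤ U ↔ ∀ a ∈ S, ∀ b ∈ T, a * b - b * a ∈ U := by
  unfold bSpan
  rw [Submodule.span_le]
  constructor
  · intro h a ha b hb
    exact h ⟨a, ha, b, hb, rfl⟩
  · rintro h x ⟨a, ha, b, hb, rfl⟩
    exact h a ha b hb

theorem bS_mono (S : Submodule K F) {T T' : Submodule K F} (h : T ≤ T') :
    bSpan K S T ≤ bSpan K S T' :=
  (bS_le _ _ _).2 fun a ha b hb => (bS_le _ _ _).1 le_rfl a ha b (h hb)

theorem pS_mono (S : Submodule K F) {T T' : Submodule K F} (h : T ≤ T') :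
    pSpan K S T ≤ pSpan K S T' :=
  (pS_le _ _ _).2 fun a ha b hb => (pS_le _ _ _).1 le_rfl a ha b (h hb)

theorem I_le (l k : ℕ) (T : Submodule K F) :
    IklS K (⊤ : Submodule K F) (l+2) k ≤ T ↔
      ∀ i j, i + j = k → ∀ a ∈ cSp K (⊤ : Submodule K F) i,
        ∀ b ∈ IklS K (⊤ : Submodule K F) (l+1) j, a * b ∈ T := by
  rw [IklS, sumS_le]
  simp only [pS_le]
  constructor
  · intro h i j hij a ha b hb
    refine h i (Finset.mem_range.2 (by omega)) a ha b ?_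
    rwa [show k - i = j by omega]
  · intro h i hi a ha b hb
    have := Finset.mem_range.1 hi
    exact h i (k - i) (by omega) a ha b hb

theorem I_mul {l k i j : ℕ} (h : i + j = k) {a b : F} (ha : a ∈ cSp K (⊤ : Submodule K F) i)
    (hb : b ∈ IklS K (⊤ : Submodule K F) (l+1) j) : a * b ∈ IklS K (⊤ : Submodule K F) (l+2) k :=
  (I_le l k _).1 le_rfl i j h a ha b hb

theorem le_Ikle {l n k : ℕ} (h1 : 1 ≤ l) (h2 : l ≤ n) :
    IklS K (⊤ : Submodule K F) l k ≤ Ikle K (R := F) n k :=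
  (sumS_le _ (fun l => IklS K (⊤ : Submodule K F) l k) _).1 le_rfl l (Finset.mem_Icc.2 ⟨h1, h2⟩)

theorem Ikle_le (n k : ℕ) (T : Submodule K F) :
    Ikle K (R := F) n k ≤ T ↔ ∀ l, l + 1 ≤ n → IklS K (⊤ : Submodule K F) (l+1) k ≤ T := by
  unfold Ikle
  rw [sumS_le]
  constructor
  · intro h l hl
    exact h _ (Finset.mem_Icc.2 ⟨by omega, hl⟩)
  · intro h l hl
    have := Finset.mem_Icc.1 hl
    obtain ⟨m, rfl⟩ : ∃ m, l = m + 1 := ⟨l - 1, by omega⟩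
    exact h m this.2

theorem Ikle_mono {n n' k : ℕ} (h : n ≤ n') : Ikle K (R := F) n k ≤ Ikle K (R := F) n' k :=
  (Ikle_le _ _ _).2 fun _ hl => le_Ikle (by omega) (by omega)

theorem c_anti (k : ℕ) : cSp K (⊤ : Submodule K F) (k+1) ≤ cSp K (⊤ : Submodule K F) k := by
  induction k with
  | zero => exact le_top
  | succ k ih => exact bS_mono _ ih

theorem I_anti (l k : ℕ) :
    IklS K (⊤ : Submodule K F) (l+1) (k+1) ≤ IklS K (⊤ : Submodule K F) (l+1) k := by
  induction l generalizing k with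
  | zero => exact c_anti k
  | succ l ih =>
    rw [I_le]
    intro i j hij a ha b hb
    cases i with
    | zero =>
      obtain rfl : j = k + 1 := by omega
      exact I_mul (i := 0) (j := k) (by omega) ha (ih k hb)
    | succ i => exact I_mul (i := i) (j := j) (by omega) (c_anti i ha) hb

variable [SMulCommClass K F F] [IsScalarTower K F F]

/-- The inner derivation of `f`. -/
def adL (K : Type*) [Field K] {F : Type*} [NonUnitalRing F] [Module K F]
    [SMulCommClass K F F] [IsScalarTower K F F] (f : F) : F →ₗ[K] F :=
  LinearMap.mulLeft K f - LinearMap.mulRight K f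

theorem bS_le' (T U : Submodule K F) :
    bSpan K ⊤ T ≤ U ↔ ∀ f, T ≤ U.comap (adL K f) := by
  rw [bS_le]
  exact ⟨fun h f b hb => h f trivial b hb, fun h f _ b hb => h f hb⟩

theorem pS_le' (T U : Submodule K F) :
    pSpan K ⊤ T ≤ U ↔ ∀ f, T ≤ U.comap (LinearMap.mulLeft K f) := by
  rw [pS_le]
  exact ⟨fun h f b hb => h f trivial b hb, fun h f _ b hb => h f hb⟩

theorem b_I (l k : ℕ) :
    bSpan K ⊤ (IklS K (⊤ : Submodule K F) (l+1) k) ≤ IklS K (⊤ : Submodule K F) (l+1) (k+1) := by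
  induction l generalizing k with
  | zero => exact le_rfl
  | succ l ih =>
    rw [bS_le']
    intro f
    rw [I_le]
    intro i j hij a ha b hb
    change f * (a * b) - (a * b) * f ∈ IklS K (⊤ : Submodule K F) (l+2) (k+1)
    have e : f * (a * b) - (a * b) * f = (f * a - a * f) * b + a * (f * b - b * f) := by
      noncomm_ring
    rw [e]
    refine add_mem (I_mul (i := i+1) (j := j) (by omega) ?_ hb)
      (I_mul (i := i) (j := j+1) (by omega) ha ?_)
    · exact (bS_le _ _ _).1 (le_refl (bSpan K ⊤ (cSp K ⊤ i))) f trivial a ha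
    · exact (bS_le _ _ _).1 (ih j) f trivial b hb

theorem b_Ikle (n k : ℕ) :
    bSpan K ⊤ (Ikle K (R := F) n k) ≤ Ikle K (R := F) n (k+1) := by
  rw [bS_le']
  intro f
  rw [Ikle_le]
  intro l hl
  exact (bS_le' _ _).1 ((b_I l k).trans (le_Ikle (by omega) hl)) f

theorem p_Ikle (n k : ℕ) :
    pSpan K ⊤ (Ikle K (R := F) n k) ≤ Ikle K (R := F) (n+1) k := by
  rw [pS_le']
  intro f
  rw [Ikle_le]
  intro l hl b hb
  exact le_Ikle (by omega) (by omega : l + 2 ≤ n + 1)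
    (I_mul (i := 0) (j := k) (by omega) (show f ∈ (⊤ : Submodule K F) from trivial) hb)

theorem move (l m : ℕ) (J : Submodule K F)
    (h0 : ∀ f, ∀ b ∈ IklS K (⊤ : Submodule K F) (l+1) (m+1), f * b ∈ J)
    (h1 : bSpan K ⊤ (IklS K (⊤ : Submodule K F) (l+2) m) ≤ J) :
    IklS K (⊤ : Submodule K F) (l+2) (m+1) ≤ J := by
  rw [I_le]
  intro i
  induction i with
  | zero =>
    intro j hj a _ b hb
    obtain rfl : j = m + 1 := by omega
    exact h0 a b hb
  | succ i ih =>
    intro j hij a ha b hb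
    suffices h : cSp K (⊤ : Submodule K F) (i+1) ≤ J.comap (LinearMap.mulRight K b) from h ha
    refine (bS_le _ _ _).2 fun f _ c hc => ?_
    change (f * c - c * f) * b ∈ J
    have e : (f * c - c * f) * b = (f * (c * b) - (c * b) * f) - c * (f * b - b * f) := by
      noncomm_ring
    rw [e]
    refine sub_mem ((bS_le _ _ _).1 h1 f trivial _ (I_mul (i := i) (j := j) (by omega) hc hb)) ?_
    exact ih (j+1) (by omega) c hc _ ((bS_le _ _ _).1 (b_I l j) f trivial b hb)

theorem key (n m : ℕ) : IklS K (⊤ : Submodule K F) (n+1) (m+1) ≤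
      pSpan K ⊤ (bSpan K ⊤ (Ikle K (R := F) n m)) ⊔
        bSpan K ⊤ (Ikle K (R := F) (n + 1) m) := by
  induction n with
  | zero =>
    refine le_trans ?_ le_sup_right
    exact bS_mono (T := IklS K (⊤ : Submodule K F) 1 m) _ (le_Ikle le_rfl le_rfl)
  | succ n ih =>
    apply move
    · intro f b hb
      apply Submodule.mem_sup_left
      suffices h : IklS K (⊤ : Submodule K F) (n+1) (m+1) ≤ Submodule.comap (LinearMap.mulLeft K f)
        (pSpan K ⊤ (bSpan K ⊤ (Ikle K (n + 1) m))) from h hb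
      refine ih.trans (sup_le ?_ ?_)
      · refine (pS_le _ _ _).2 fun g _ c hc => ?_
        change f * (g * c) ∈ pSpan K ⊤ (bSpan K ⊤ (Ikle K (n + 1) m))
        rw [← mul_assoc]
        exact (pS_le ⊤ _ _).1 le_rfl _ Submodule.mem_top _ (bS_mono _ (Ikle_mono (by omega)) hc)
      · exact (pS_le' _ _).1 le_rfl f
    · exact (bS_mono _ (le_Ikle (by omega) le_rfl)).trans le_sup_right

end helpers

/-- basic properties of the subspaces `I_k^ℓ(F)` and `I_k^{≤ℓ}(F)`. -/
theorem statement0 {K : Type*} [Field K] [CharZero K]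
    {F : Type*} [NonUnitalRing F] [Module K F] [SMulCommClass K F F] [IsScalarTower K F F]
    (k ℓ : ℕ) (hk : 1 ≤ k) (hℓ : 1 ≤ ℓ) :
    IklS K (⊤ : Submodule K F) ℓ k ≤ IklS K (⊤ : Submodule K F) ℓ (k - 1) ∧
    Ikle K (R := F) ℓ k ≤ Ikle K (R := F) ℓ (k - 1) ∧
    bSpan K ⊤ (IklS K (⊤ : Submodule K F) ℓ (k - 1)) ≤ IklS K (⊤ : Submodule K F) ℓ k ∧
    bSpan K ⊤ (Ikle K (R := F) ℓ (k - 1)) ≤ Ikle K (R := F) ℓ k ∧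
    Ikle K (R := F) (ℓ + 1) k =
      pSpan K ⊤ (bSpan K ⊤ (Ikle K (R := F) ℓ (k - 1))) ⊔
        bSpan K ⊤ (Ikle K (R := F) (ℓ + 1) (k - 1)) := by
  obtain ⟨m, rfl⟩ : ∃ m, k = m + 1 := ⟨k - 1, by omega⟩
  obtain ⟨l, rfl⟩ : ∃ l, ℓ = l + 1 := ⟨ℓ - 1, by omega⟩
  simp only [Nat.add_sub_cancel]
  refine ⟨I_anti l m, ?_, b_I l m, b_Ikle _ m, le_antisymm ?_ (sup_le ?_ (b_Ikle _ m))⟩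
  · rw [Ikle_le]
    intro i hi
    exact (I_anti i m).trans (le_Ikle (by omega) hi)
  · rw [Ikle_le]
    intro i hi
    exact (key i m).trans (sup_le_sup (pS_mono _ (bS_mono _ (Ikle_mono (by omega))))
      (bS_mono _ (Ikle_mono hi)))
  · exact (pS_mono _ (b_Ikle _ m)).trans (p_Ikle _ _)
end

section
/- Let (g,A) be a compatible pair over a field k of characteristic 0. For m ≥ 2, let ğ^m denote the k-linear span of all m-th powers g^m with g ∈ g. Then for every m ≥ 2 one has ğ^m + (g^{m−1} ∩ g^m) = g^m. -/
open Submodule TensorProduct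

variable (K : Type*) [Field K]

theorem mul_mem_gPow {K : Type*} [Field K] {A : Type*} [Ring A] [Algebra K A]
    (g : Submodule K A) {a b : A} (ha : a ∈ g) (n : ℕ) (hb : b ∈ gPow K g n) :
    a * b ∈ gPow K g (n + 1) := by
  cases n with
  | zero =>
    have : b = 0 := by simpa [gPow] using hb
    subst this
    simp
  | succ n => exact Submodule.subset_span ⟨a, ha, b, hb, rfl⟩

theorem list_prod_mem_gPow {K : Type*} [Field K] {A : Type*} [Ring A] [Algebra K A]
    (g : Submodule K A) (l : List A) : ∀ a ∈ g, (∀ x ∈ l, x ∈ g) →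
    a * l.prod ∈ gPow K g (l.length + 1) := by
  induction l with
  | nil => intro a ha _; simpa [gPow] using ha
  | cons b l ih =>
    intro a ha h
    rw [List.prod_cons, List.length_cons]
    exact mul_mem_gPow g ha _ (ih b (h b (by simp)) (fun x hx => h x (by simp [hx])))

theorem gPow_le_span {K : Type*} [Field K] {A : Type*} [Ring A] [Algebra K A]
    (g : Submodule K A) (n : ℕ) : gPow K g (n + 1) ≤
      Submodule.span K {y | ∃ l : List A, l.length = n + 1 ∧ (∀ x ∈ l, x ∈ g) ∧ y = l.prod} := by
  induction n with
  | zero => 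
    intro x hx
    exact Submodule.subset_span ⟨[x], rfl, by simpa [gPow] using hx, by simp⟩
  | succ n ih =>
    change Submodule.span K _ ≤ _
    rw [Submodule.span_le]
    rintro _ ⟨a, ha, b, hb, rfl⟩
    have hb' := ih hb
    clear hb
    change a * b ∈ Submodule.span K _
    induction hb' using Submodule.span_induction with
    | mem y hy =>
      obtain ⟨l, hl, hlg, rfl⟩ := hy
      exact Submodule.subset_span ⟨a :: l, by simp [hl], by simpa using ⟨ha, hlg⟩, by simp⟩
    | zero => simp
    | add x y _ _ hx hy =>
      rw [mul_add]
      exact add_mem hx hy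
    | smul c x _ hx =>
      rw [mul_smul_comm]
      exact Submodule.smul_mem _ _ hx

theorem perm_prod_sub_mem {K : Type*} [Field K] {A : Type*} [Ring A] [Algebra K A]
    (g : Submodule K A) (hg : ∀ x ∈ g, ∀ y ∈ g, x * y - y * x ∈ g) {l₁ l₂ : List A}
    (h : l₁.Perm l₂) : (∀ x ∈ l₁, x ∈ g) →
    l₁.prod - l₂.prod ∈ gPow K g (l₁.length - 1) ⊓ gPow K g l₁.length := by
  induction h with
  | nil => simp
  | @cons a l₁ l₂ h ih =>
    intro hl
    have ha : a ∈ g := hl a (by simp)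
    obtain ⟨h1, h2⟩ := ih (fun x hx => hl x (by simp [hx]))
    rw [List.prod_cons, List.prod_cons, ← mul_sub, List.length_cons]
    refine ⟨?_, mul_mem_gPow g ha _ h2⟩
    have := mul_mem_gPow g ha _ h1
    rcases hn : l₁.length with _ | n
    · have : l₁ = [] := List.length_eq_zero_iff.mp hn
      subst this
      have := h.nil_eq
      subst this
      simp
    · rw [hn] at this
      exact this
  | swap a b l =>
    intro hl
    have ha : a ∈ g := hl a (by simp)
    have hb : b ∈ g := hl b (by simp)
    have hl' : ∀ x ∈ l, x ∈ g := fun x hx => hl x (by simp [hx])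
    have e : (b :: a :: l).prod - (a :: b :: l).prod = (b * a - a * b) * l.prod := by
      simp only [List.prod_cons]; noncomm_ring
    refine ⟨?_, ?_⟩
    · rw [e]
      exact list_prod_mem_gPow g l _ (hg _ hb _ ha) hl'
    · refine sub_mem ?_ ?_
      · rw [List.prod_cons]
        exact list_prod_mem_gPow g (a :: l) b hb (by simpa using ⟨ha, hl'⟩)
      · rw [List.prod_cons]
        exact list_prod_mem_gPow g (b :: l) a ha (by simpa using ⟨hb, hl'⟩)
  | trans h1 h2 ih1 ih2 =>
    intro hl
    have a1 := ih1 hl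
    have a2 := ih2 (fun x hx => hl x (h1.mem_iff.mpr hx))
    rw [← h1.length_eq] at a2
    simpa using add_mem a1 a2

theorem polar_id {K : Type*} [Field K] {A : Type*} [Ring A] [Algebra K A] (m : ℕ)
    (x : Fin m → A) :
    ∑ T : Finset (Fin m), (-1 : ℤ) ^ T.card • (∑ i ∈ Tᶜ, x i) ^ m =
    ∑ φ : Fin m → Fin m, (if (Finset.univ.image φ)ᶜ = ∅ then (1 : ℤ) else 0) •
      (List.ofFn (fun i => x (φ i))).prod := by
  have e : ∀ T : Finset (Fin m), (∑ i ∈ Tᶜ, x i) ^ m =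
      ∑ φ : Fin m → Fin m, if T ∈ ((Finset.univ.image φ)ᶜ).powerset then
        (List.ofFn (fun i => x (φ i))).prod else 0 := by
    intro T
    have := (MultilinearMap.mkPiAlgebraFin K m A).map_sum_finset (fun _ j => x j) (fun _ => Tᶜ)
    rw [MultilinearMap.mkPiAlgebraFin_apply_const] at this
    rw [this, ← Finset.sum_filter]
    simp only [MultilinearMap.mkPiAlgebraFin_apply]
    refine Finset.sum_congr ?_ (fun _ _ => rfl)
    ext φ
    simp only [Fintype.mem_piFinset, Finset.mem_compl, Finset.mem_powerset, Finset.mem_filter,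
      Finset.mem_univ, true_and, Finset.subset_iff, Finset.mem_image, not_exists]
    constructor
    · intro h y hy i hi
      exact h i (hi ▸ hy)
    · intro h i hi
      exact h hi i rfl
  simp_rw [e, Finset.smul_sum]
  rw [Finset.sum_comm]
  refine Finset.sum_congr rfl (fun φ _ => ?_)
  rw [← Finset.sum_powerset_neg_one_pow_card, Finset.sum_smul]
  simp_rw [smul_ite, smul_zero]
  rw [← Finset.sum_filter]
  refine Finset.sum_congr ?_ (fun _ _ => rfl)
  ext; simp

/-- for a compatible pair `(g, A)` and `m ≥ 2`, the span of `m`-th powers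
of elements of `g`, together with `g^{m-1} ∩ g^m`, is all of `g^m`. -/
theorem statement2 {K : Type*} [Field K] [CharZero K]
    {A : Type*} [Ring A] [Algebra K A]
    (g : Submodule K A) (hg : ∀ x ∈ g, ∀ y ∈ g, x * y - y * x ∈ g)
    (m : ℕ) (hm : 2 ≤ m) :
    Submodule.span K {y : A | ∃ x ∈ g, y = x ^ m} ⊔ (gPow K g (m - 1) ⊓ gPow K g m) =
      gPow K g m := by
  obtain ⟨n, rfl⟩ : ∃ n, m = n + 1 := ⟨m - 1, by omega⟩
  apply le_antisymm
  · refine sup_le ?_ inf_le_right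
    rw [Submodule.span_le]
    rintro _ ⟨x, hx, rfl⟩
    have := list_prod_mem_gPow g (List.replicate n x) x hx
      (fun y hy => (List.eq_of_mem_replicate hy) ▸ hx)
    rw [List.prod_replicate, List.length_replicate, ← pow_succ'] at this
    exact this
  · refine (gPow_le_span g n).trans ?_
    rw [Submodule.span_le]
    rintro _ ⟨l, hl, hlg, rfl⟩
    generalize n + 1 = m at *
    subst hl
    set N := Submodule.span K {y : A | ∃ x ∈ g, y = x ^ l.length} ⊔
      (gPow K g (l.length - 1) ⊓ gPow K g l.length) with hN
    have hx : ∀ i, l.get i ∈ g := fun i => hlg _ (List.get_mem l i)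
    have h1 := polar_id (K := K) l.length l.get
    have h2 : ∑ T : Finset (Fin l.length), (-1 : ℤ) ^ T.card • (∑ i ∈ Tᶜ, l.get i) ^ l.length
        ∈ N := by
      refine sum_mem fun T _ => zsmul_mem ?_ _
      exact Submodule.mem_sup_left (Submodule.subset_span
        ⟨_, sum_mem fun i _ => hx i, rfl⟩)
    rw [h1] at h2
    have h3 : ∑ φ : Fin l.length → Fin l.length,
        (if (Finset.univ.image φ)ᶜ = ∅ then (1 : ℤ) else 0) •
        (l.prod - (List.ofFn (fun i => l.get (φ i))).prod) ∈ N := by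
      refine sum_mem fun φ _ => ?_
      split_ifs with h
      · rw [one_smul]
        have hs : Function.Surjective φ := by
          rw [Finset.compl_eq_empty_iff] at h
          intro y
          have : y ∈ Finset.univ.image φ := by rw [h]; exact Finset.mem_univ y
          simpa using this
        have hb : Function.Bijective φ := ⟨Finite.injective_iff_surjective.mpr hs, hs⟩
        have hp := Equiv.Perm.ofFn_comp_perm (Equiv.ofBijective φ hb) l.get
        rw [List.ofFn_get] at hp
        exact Submodule.mem_sup_right (perm_prod_sub_mem g hg hp.symm hlg)
      · simp
    have h4 := add_mem h3 h2
    rw [← Finset.sum_add_distrib] at h4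
    simp_rw [← smul_add, sub_add_cancel] at h4
    rw [← Finset.sum_smul, Finset.sum_boole, ← Int.cast_smul_eq_zsmul K] at h4
    refine (Submodule.smul_mem_iff _ ?_).mp h4
    norm_cast
    refine Finset.card_ne_zero_of_mem (a := id) ?_
    simp
end

section
/- Let (g,A) be a compatible pair over a field k of characteristic 0 and F an associative k-algebra. Then for all k ≥ 0: (a) F^(k) ⊗ g^{k+1} ⊆ (g,A)(F) and (F·F^(k)) ⊗ [g, g^{k+1}] ⊆ (g,A)(F). -/
open Submodule TensorProduct

variable (K : Type*) [Field K]

section helpers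
variable {K}

lemma aux_gPow {A : Type*} [Ring A] [Algebra K A] (g : Submodule K A) (n : ℕ) :
    gPow K g (n + 1) = g ^ (n + 1) := by
  induction n with
  | zero => simp [gPow]
  | succ n ih =>
    rw [pow_succ', ← ih]
    apply le_antisymm
    · refine Submodule.span_le.2 ?_
      rintro x ⟨a, ha, b, hb, rfl⟩
      exact Submodule.mul_mem_mul ha hb
    · refine Submodule.mul_le.2 ?_
      intro a ha b hb
      exact Submodule.subset_span ⟨a, ha, b, hb, rfl⟩

lemma aux_comm1 {A : Type*} [Ring A] [Algebra K A] (g : Submodule K A)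
    (hg : ∀ x ∈ g, ∀ y ∈ g, x * y - y * x ∈ g) (j : ℕ) :
    ∀ a ∈ g, ∀ q ∈ g ^ (j + 1), a * q - q * a ∈ g ^ (j + 1) := by
  intro a ha
  induction j with
  | zero => simpa using hg a ha
  | succ j ih =>
    intro q hq
    rw [pow_succ'] at hq
    induction hq using Submodule.mul_induction_on' with
    | mem_mul_mem x hx y hy =>
      have e : a * (x * y) - x * y * a = (a * x - x * a) * y + x * (a * y - y * a) := by
        noncomm_ring
      rw [e, pow_succ']
      exact add_mem (Submodule.mul_mem_mul (hg a ha x hx) hy)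
        (Submodule.mul_mem_mul hx (ih y hy))
    | add x _ y _ h1 h2 =>
      have e : a * (x + y) - (x + y) * a = (a * x - x * a) + (a * y - y * a) := by
        noncomm_ring
      rw [e]; exact add_mem h1 h2

lemma aux_comm {A : Type*} [Ring A] [Algebra K A] (g : Submodule K A)
    (hg : ∀ x ∈ g, ∀ y ∈ g, x * y - y * x ∈ g) (j i : ℕ) :
    ∀ p ∈ g ^ (i + 1), ∀ q ∈ g ^ (j + 1), p * q - q * p ∈ g ^ (i + j + 1) := by
  induction i with
  | zero =>
    intro p hp q hq
    simpa using aux_comm1 g hg j p (by simpa using hp) q hq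
  | succ i ih =>
    intro p hp q hq
    rw [pow_succ'] at hp
    induction hp using Submodule.mul_induction_on' with
    | mem_mul_mem x hx y hy =>
      have e : x * y * q - q * (x * y) = x * (y * q - q * y) + (x * q - q * x) * y := by
        noncomm_ring
      rw [e]
      refine add_mem ?_ ?_
      · rw [show i + 1 + j + 1 = (i + j + 1) + 1 by ring, pow_succ']
        exact Submodule.mul_mem_mul hx (ih y hy q hq)
      · rw [show i + 1 + j + 1 = (j + 1) + (i + 1) by ring, pow_add]
        exact Submodule.mul_mem_mul (aux_comm1 g hg j x hx q hq) hy
    | add x _ y _ h1 h2 =>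
      have e : (x + y) * q - q * (x + y) = (x * q - q * x) + (y * q - q * y) := by
        noncomm_ring
      rw [e]; exact add_mem h1 h2

lemma aux_cSp {F : Type*} [NonUnitalRing F] [Module K F] (k : ℕ) :
    cSp K (⊤ : Submodule K F) (k + 1) ≤ cSp K ⊤ k := by
  induction k with
  | zero => exact le_top
  | succ k ih =>
    refine Submodule.span_mono ?_
    rintro x ⟨a, ha, b, hb, rfl⟩
    exact ⟨a, ha, b, ih hb, rfl⟩

lemma aux_br {F : Type*} [NonUnitalRing F] [Module K F] {k : ℕ} (f : F) {h : F}
    (hh : h ∈ cSp K (⊤ : Submodule K F) k) :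
    f * h - h * f ∈ cSp K (⊤ : Submodule K F) (k + 1) :=
  Submodule.subset_span ⟨f, trivial, h, hh, rfl⟩

variable {F : Type*} [NonUnitalRing F] [Module K F] [SMulCommClass K F F] [IsScalarTower K F F]
    {A : Type*} [Ring A] [Algebra K A]

lemma aux_gen (g : Submodule K A) (f : F) {a : A} (ha : a ∈ g) :
    f ⊗ₜ[K] a ∈ currentLie K (F := F) g := by
  refine Submodule.mem_sInf.2 fun T hT => hT.1 ?_
  exact Submodule.subset_span ⟨f, trivial, a, ha, rfl⟩

lemma aux_lie (g : Submodule K A) {f h : F} {a b : A}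
    (h1 : f ⊗ₜ[K] a ∈ currentLie K (F := F) g) (h2 : h ⊗ₜ[K] b ∈ currentLie K (F := F) g) :
    (f * h) ⊗ₜ[K] (a * b - b * a) + (f * h - h * f) ⊗ₜ[K] (b * a) ∈ currentLie K (F := F) g := by
  have h3 : (f ⊗ₜ[K] a) * (h ⊗ₜ[K] b) - (h ⊗ₜ[K] b) * (f ⊗ₜ[K] a) ∈ currentLie K (F := F) g := by
    refine Submodule.mem_sInf.2 fun T hT => hT.2 _ ?_ _ ?_
    · exact Submodule.mem_sInf.1 h1 T hT
    · exact Submodule.mem_sInf.1 h2 T hT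
  convert h3 using 1
  simp only [Algebra.TensorProduct.tmul_mul_tmul, tmul_sub, sub_tmul]
  abel

/-- Linear span criterion for tensors of spans. -/
lemma aux_span (L : Submodule K (F ⊗[K] A)) (S : Set F) (T : Set A)
    (H : ∀ f ∈ S, ∀ a ∈ T, f ⊗ₜ[K] a ∈ L) :
    ∀ f ∈ Submodule.span K S, ∀ a ∈ Submodule.span K T, f ⊗ₜ[K] a ∈ L := by
  intro f hf a ha
  induction hf using Submodule.span_induction with
  | mem f hf =>
    induction ha using Submodule.span_induction with
    | mem a ha => exact H f hf a ha
    | zero => simp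
    | add x y _ _ h1 h2 => rw [tmul_add]; exact add_mem h1 h2
    | smul c x _ h1 => rw [tmul_smul]; exact L.smul_mem c h1
  | zero => simp
  | add x y _ _ h1 h2 => rw [add_tmul]; exact add_mem h1 h2
  | smul c x _ h1 => rw [← smul_tmul']; exact L.smul_mem c h1

/-- The cyclic argument, second part. -/
lemma aux_cyc [CharZero K] (g : Submodule K A)
    (hg : ∀ x ∈ g, ∀ y ∈ g, x * y - y * x ∈ g) (L : Submodule K (F ⊗[K] A)) (n : ℕ) (s c : F)
    (hc : ∀ w ∈ g ^ (n + 1), c ⊗ₜ[K] w ∈ L)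
    (h1 : ∀ a ∈ g, ∀ w ∈ g ^ (n + 1), s ⊗ₜ[K] (a * w - w * a) + c ⊗ₜ[K] (w * a) ∈ L) :
    ∀ a ∈ g, ∀ w ∈ g ^ (n + 1), s ⊗ₜ[K] (a * w - w * a) ∈ L := by
  have main : ∀ i j : ℕ, i + j = n → ∀ p ∈ g ^ (i + 1), ∀ q ∈ g ^ (j + 1),
      s ⊗ₜ[K] (p * q - q * p) + ((i : K) + 1) • c ⊗ₜ[K] (q * p) ∈ L := by
    intro i
    induction i with
    | zero =>
      intro j hj p hp q hq
      obtain rfl : j = n := by omega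
      simpa using h1 p (by simpa using hp) q hq
    | succ i ih =>
      intro j hj p hp q hq
      rw [pow_succ'] at hp
      induction hp using Submodule.mul_induction_on' with
      | mem_mul_mem x hx y hy =>
        have hqx : q * x ∈ g ^ (j + 1 + 1) := by
          rw [pow_succ]; exact Submodule.mul_mem_mul hq hx
        have hyq : y * q ∈ g ^ (n + 1) := by
          rw [show n + 1 = (i + 1) + (j + 1) by omega, pow_add]
          exact Submodule.mul_mem_mul hy hq
        have e1 := ih (j + 1) (by omega) y hy (q * x) hqx
        have e2 := h1 x hx (y * q) hyq
        have e3 := hc _ (by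
          have := aux_comm g hg (j + 1) i y hy (q * x) hqx
          rwa [show i + (j + 1) + 1 = n + 1 by omega] at this)
        have e4 := sub_mem (add_mem e1 e2) e3
        convert e4 using 1
        push_cast
        simp only [tmul_sub, mul_assoc, add_smul, one_smul]
        abel
      | add x _ y _ h1 h2 =>
        convert add_mem h1 h2 using 1
        simp only [add_mul, mul_add, tmul_sub, tmul_add, smul_add]
        abel
  intro a ha w hw
  have e1 := main n 0 (by omega) w hw a (by simpa using ha)
  have e2 := h1 a ha w hw
  have e3 := hc _ (aux_comm1 g hg n a ha w hw)
  have e4 : ((n : K) + 2) • c ⊗ₜ[K] (w * a) ∈ L := by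
    have := sub_mem (add_mem e1 e2) (L.smul_mem ((n : K) + 1) e3)
    convert this using 1
    rw [show (n : K) + 2 = (n + 1) + 1 by ring, add_smul _ (1 : K), one_smul]
    simp only [tmul_sub, smul_sub]
    abel
  have hn : (n : K) + 2 ≠ 0 := by exact_mod_cast (Nat.succ_ne_zero (n + 1))
  have e5 := (L.smul_mem_iff hn).1 e4
  simpa using sub_mem e2 e5

lemma aux_main [CharZero K] (g : Submodule K A)
    (hg : ∀ x ∈ g, ∀ y ∈ g, x * y - y * x ∈ g) (k : ℕ) :
    (∀ h ∈ cSp K (⊤ : Submodule K F) k, ∀ w ∈ g ^ (k + 1),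
      h ⊗ₜ[K] w ∈ currentLie K (F := F) g) ∧
    (∀ f : F, ∀ h ∈ cSp K (⊤ : Submodule K F) k, ∀ a ∈ g, ∀ w ∈ g ^ (k + 1),
      (f * h) ⊗ₜ[K] (a * w - w * a) ∈ currentLie K (F := F) g) := by
  induction k with
  | zero =>
    refine ⟨fun h _ w hw => aux_gen g h (by simpa using hw), fun f h _ a ha w hw => ?_⟩
    exact aux_gen g _ (hg a ha w (by simpa using hw))
  | succ k ih =>
    obtain ⟨ih1, ih2⟩ := ih
    have A1 : ∀ h ∈ cSp K (⊤ : Submodule K F) (k + 1), ∀ w ∈ g ^ (k + 1 + 1),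
        h ⊗ₜ[K] w ∈ currentLie K (F := F) g := by
      intro h hh w hw
      rw [pow_succ] at hw
      induction hw using Submodule.mul_induction_on' with
      | mem_mul_mem w hw a ha =>
        induction hh using Submodule.span_induction with
        | mem h hh =>
          obtain ⟨f, -, h, hh, rfl⟩ := hh
          have := sub_mem (aux_lie g (aux_gen g f ha) (ih1 h hh w hw)) (ih2 f h hh a ha w hw)
          simpa using this
        | zero => simp
        | add x y _ _ h1 h2 => rw [add_tmul]; exact add_mem h1 h2
        | smul c x _ h1 => rw [← smul_tmul']; exact Submodule.smul_mem _ c h1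
      | add x _ y _ h1 h2 => rw [tmul_add]; exact add_mem h1 h2
    refine ⟨A1, ?_⟩
    intro f h hh a ha w hw
    induction hh using Submodule.span_induction with
    | mem h hh =>
      obtain ⟨u, -, h, hh, rfl⟩ := hh
      have key := aux_cyc g hg (currentLie K (F := F) g) (k + 1)
        ((2 : K) • (f * (u * h - h * u))) ((f * u - u * f) * h - h * (f * u - u * f))
        (fun w hw => A1 _ (aux_br _ hh) w hw) ?_ a ha w hw
      · rw [← smul_tmul'] at key
        exact (Submodule.smul_mem_iff _ two_ne_zero).1 key
      · intro a ha w hw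
        have e1 := aux_lie g (aux_gen g f ha) (A1 _ (aux_br u hh) w hw)
        have e2 := aux_lie g (aux_gen g u ha) (A1 _ (aux_br f hh) w hw)
        have e3 := A1 _ (add_mem (aux_br (f * u) hh) (aux_br u (aux_cSp k (aux_br f hh)))) _
          (aux_comm1 g hg (k + 1) a ha w hw)
        have e4 := add_mem (sub_mem e1 e2) e3
        convert e4 using 1
        generalize a * w - w * a = z
        simp only [two_smul, mul_sub, sub_mul, sub_tmul, add_tmul, mul_assoc]
        abel
    | zero => simp
    | add x y _ _ h1 h2 => rw [mul_add, add_tmul]; exact add_mem h1 h2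
    | smul c x _ h1 => rw [mul_smul_comm, ← smul_tmul']; exact Submodule.smul_mem _ c h1

end helpers

/-- `F^(k) ⊗ g^{k+1} ⊆ (g,A)(F)` and `(F·F^(k)) ⊗ [g, g^{k+1}] ⊆ (g,A)(F)`. -/
theorem statement3 {K : Type*} [Field K] [CharZero K]
    {F : Type*} [NonUnitalRing F] [Module K F] [SMulCommClass K F F] [IsScalarTower K F F]
    {A : Type*} [Ring A] [Algebra K A]
    (g : Submodule K A) (hg : ∀ x ∈ g, ∀ y ∈ g, x * y - y * x ∈ g) (k : ℕ) :
    tSpan K (cSp K (⊤ : Submodule K F) k) (gPow K g (k + 1)) ≤ currentLie K (F := F) g ∧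
    tSpan K (pSpan K (⊤ : Submodule K F) (cSp K ⊤ k)) (bSpan K g (gPow K g (k + 1))) ≤
      currentLie K (F := F) g := by
  obtain ⟨h1, h2⟩ := aux_main (F := F) g hg k
  rw [aux_gPow]
  constructor
  · refine Submodule.span_le.2 ?_
    rintro z ⟨f, hf, a, ha, rfl⟩
    exact h1 f hf a ha
  · refine Submodule.span_le.2 ?_
    rintro z ⟨f, hf, a, ha, rfl⟩
    refine aux_span _ _ _ ?_ f hf a ha
    rintro _ ⟨f, -, h, hh, rfl⟩ _ ⟨a, ha, w, hw, rfl⟩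
    exact h2 f h hh a ha w hw
end

section
/- Let (g,A) be a compatible pair over a field k of characteristic 0 such that g is abelian, i.e. [g,g] = 0. Then for every associative k-algebra F one has (g,A)(F) = Σ_{k≥0} F^(k) ⊗ g^{k+1}. -/
open Submodule TensorProduct

variable (K : Type*) [Field K]

theorem aux_cSp_s4 {K : Type*} [Field K]
    {F : Type*} [NonUnitalRing F] [Module K F] [SMulCommClass K F F] [IsScalarTower K F F]
    (i : ℕ) : ∀ (j : ℕ) (x y : F), x ∈ cSp K (⊤ : Submodule K F) i →
      y ∈ cSp K (⊤ : Submodule K F) j → x * y - y * x ∈ cSp K (⊤ : Submodule K F) (i + j + 1) := by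
  induction i with
  | zero =>
    intro j x y _ hy
    rw [Nat.zero_add]
    exact Submodule.subset_span ⟨x, trivial, y, hy, rfl⟩
  | succ i ih =>
    intro j x y hx hy
    have hx' : x ∈ Submodule.span K {x : F | ∃ a ∈ (⊤ : Submodule K F),
      ∃ b ∈ cSp K (⊤ : Submodule K F) i, x = a * b - b * a} := hx
    clear hx
    induction hx' using Submodule.span_induction with
    | mem x h =>
      obtain ⟨a, ha, b, hb, rfl⟩ := h
      have h1 : a * (b * y - y * b) - (b * y - y * b) * a ∈
          cSp K (⊤ : Submodule K F) (i + j + 1 + 1) :=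
        Submodule.subset_span ⟨a, trivial, _, ih j b y hb hy, rfl⟩
      have h2 : a * y - y * a ∈ cSp K (⊤ : Submodule K F) (j + 1) :=
        Submodule.subset_span ⟨a, trivial, _, hy, rfl⟩
      have h3 := ih (j + 1) b _ hb h2
      have e : i + 1 + j + 1 = i + j + 1 + 1 := by omega
      have e' : i + (j + 1) + 1 = i + j + 1 + 1 := by omega
      rw [e'] at h3
      rw [e]
      have := Submodule.sub_mem _ h1 h3
      convert this using 1
      noncomm_ring
    | zero => simp
    | add x z hx hz h1 h2 =>
      have := Submodule.add_mem _ h1 h2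
      convert this using 1
      noncomm_ring
    | smul c x hx h =>
      have := Submodule.smul_mem _ c h
      convert this using 1
      rw [smul_mul_assoc, mul_smul_comm, smul_sub]

theorem aux_comm1_s4 {K : Type*} [Field K] {A : Type*} [Ring A] [Algebra K A]
    (g : Submodule K A) (z : A) (hz : ∀ x ∈ g, x * z = z * x) (n : ℕ) :
    ∀ x ∈ gPow K g (n + 1), x * z = z * x := by
  induction n with
  | zero => exact hz
  | succ n ih =>
    intro x hx
    have hx' : x ∈ Submodule.span K {x : A | ∃ a ∈ g,
      ∃ b ∈ gPow K g (n + 1), x = a * b} := hx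
    clear hx
    induction hx' using Submodule.span_induction with
    | mem x h =>
      obtain ⟨a, ha, b, hb, rfl⟩ := h
      rw [mul_assoc, ih b hb, ← mul_assoc, hz a ha, mul_assoc]
    | zero => simp
    | add x y _ _ h1 h2 => rw [add_mul, mul_add, h1, h2]
    | smul c x _ h => rw [smul_mul_assoc, mul_smul_comm, h]

theorem aux_mul {K : Type*} [Field K] {A : Type*} [Ring A] [Algebra K A]
    (g : Submodule K A) (m n : ℕ) :
    ∀ x ∈ gPow K g (m + 1), ∀ y ∈ gPow K g (n + 1), x * y ∈ gPow K g (m + n + 1 + 1) := by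
  induction m with
  | zero =>
    intro x hx y hy
    rw [Nat.zero_add]
    exact Submodule.subset_span ⟨x, hx, y, hy, rfl⟩
  | succ m ih =>
    intro x hx y hy
    have hx' : x ∈ Submodule.span K {x : A | ∃ a ∈ g,
      ∃ b ∈ gPow K g (m + 1), x = a * b} := hx
    clear hx
    induction hx' using Submodule.span_induction with
    | mem x h =>
      obtain ⟨a, ha, b, hb, rfl⟩ := h
      have e : m + 1 + n + 1 + 1 = (m + n + 1) + 2 := by omega
      rw [mul_assoc, e]
      exact Submodule.subset_span ⟨a, ha, _, ih b hb y hy, rfl⟩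
    | zero => simp
    | add x y _ _ h1 h2 => rw [add_mul]; exact Submodule.add_mem _ h1 h2
    | smul c x _ h => rw [smul_mul_assoc]; exact Submodule.smul_mem _ c h

/-- if `g` is abelian, then `(g,A)(F) = Σ_{k ≥ 0} F^(k) ⊗ g^{k+1}`. -/
theorem statement4 {K : Type*} [Field K] [CharZero K]
    {F : Type*} [NonUnitalRing F] [Module K F] [SMulCommClass K F F] [IsScalarTower K F F]
    {A : Type*} [Ring A] [Algebra K A]
    (g : Submodule K A) (hg : ∀ x ∈ g, ∀ y ∈ g, x * y - y * x ∈ g)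
    (habelian : bSpan K g g = ⊥) :
    currentLie K (F := F) g =
      ⨆ k : ℕ, tSpan K (cSp K (⊤ : Submodule K F) k) (gPow K g (k + 1)) := by
  have hc : ∀ x ∈ g, ∀ y ∈ g, x * y = y * x := by
    intro x hx y hy
    have : x * y - y * x ∈ bSpan K g g := Submodule.subset_span ⟨x, hx, y, hy, rfl⟩
    rw [habelian, Submodule.mem_bot] at this
    exact sub_eq_zero.mp this
  have hc1 : ∀ n, ∀ x ∈ g, ∀ y ∈ gPow K g (n + 1), x * y = y * x := fun n x hx y hy =>
    (aux_comm1_s4 g x (fun z hz => hc z hz x hx) n y hy).symm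
  have hc2 : ∀ m n, ∀ x ∈ gPow K g (m + 1), ∀ y ∈ gPow K g (n + 1), x * y = y * x :=
    fun m n x hx y hy => aux_comm1_s4 g y (fun z hz => hc1 n z hz y hy) m x hx
  apply le_antisymm
  · refine sInf_le ⟨le_iSup (fun k : ℕ =>
      tSpan K (cSp K (⊤ : Submodule K F) k) (gPow K g (k + 1))) 0, ?_⟩
    intro x hx y hy
    induction hx using Submodule.iSup_induction' with
    | zero => simp
    | add x z _ _ h1 h2 =>
      have := Submodule.add_mem _ h1 h2
      convert this using 1
      noncomm_ring
    | mem i x hx =>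
      induction hy using Submodule.iSup_induction' with
      | zero => simp
      | add x z _ _ h1 h2 =>
        have := Submodule.add_mem _ h1 h2
        convert this using 1
        noncomm_ring
      | mem j y hy =>
        unfold tSpan at hx hy
        induction hx using Submodule.span_induction with
        | zero => simp
        | add x z _ _ h1 h2 =>
          have := Submodule.add_mem _ h1 h2
          convert this using 1
          noncomm_ring
        | smul c x _ h =>
          have := Submodule.smul_mem _ c h
          convert this using 1
          rw [smul_mul_assoc, mul_smul_comm, smul_sub]
        | mem x hx =>
          induction hy using Submodule.span_induction with
          | zero => simp
          | add x z _ _ h1 h2 =>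
            have := Submodule.add_mem _ h1 h2
            convert this using 1
            noncomm_ring
          | smul c x _ h =>
            have := Submodule.smul_mem _ c h
            convert this using 1
            rw [smul_mul_assoc, mul_smul_comm, smul_sub]
          | mem y hy =>
            obtain ⟨f, hf, a, ha, rfl⟩ := hx
            obtain ⟨f', hf', b, hb, rfl⟩ := hy
            refine Submodule.mem_iSup_of_mem (i + j + 1) (Submodule.subset_span
              ⟨f * f' - f' * f, aux_cSp_s4 i j f f' hf hf', a * b, aux_mul g i j a ha b hb, ?_⟩)
            rw [Algebra.TensorProduct.tmul_mul_tmul, Algebra.TensorProduct.tmul_mul_tmul,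
              TensorProduct.sub_tmul, hc2 i j a ha b hb]
  · refine le_sInf ?_
    rintro T ⟨hT, hT'⟩
    refine iSup_le fun k => ?_
    induction k with
    | zero => exact hT
    | succ k ih =>
      refine Submodule.span_le.mpr ?_
      rintro _ ⟨f, hf, a, ha, rfl⟩
      have hf' : f ∈ Submodule.span K {x : F | ∃ a ∈ (⊤ : Submodule K F),
        ∃ b ∈ cSp K (⊤ : Submodule K F) k, x = a * b - b * a} := hf
      have ha' : a ∈ Submodule.span K {x : A | ∃ a ∈ g,
        ∃ b ∈ gPow K g (k + 1), x = a * b} := ha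
      clear hf ha
      show f ⊗ₜ[K] a ∈ T
      induction hf' using Submodule.span_induction with
      | zero => simp
      | add x z _ _ h1 h2 => rw [TensorProduct.add_tmul]; exact Submodule.add_mem _ h1 h2
      | smul c x _ h => rw [← TensorProduct.smul_tmul']; exact Submodule.smul_mem _ c h
      | mem f hf =>
        induction ha' using Submodule.span_induction with
        | zero => simp
        | add x z _ _ h1 h2 => rw [TensorProduct.tmul_add]; exact Submodule.add_mem _ h1 h2
        | smul c x _ h => rw [TensorProduct.tmul_smul]; exact Submodule.smul_mem _ c h
        | mem a ha =>
          obtain ⟨p, -, q, hq, rfl⟩ := hf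
          obtain ⟨a, ha, b, hb, rfl⟩ := ha
          have := hT' (p ⊗ₜ[K] a) (hT (Submodule.subset_span ⟨p, trivial, a, ha, rfl⟩))
            (q ⊗ₜ[K] b) (ih (Submodule.subset_span ⟨q, hq, b, hb, rfl⟩))
          rwa [Algebra.TensorProduct.tmul_mul_tmul, Algebra.TensorProduct.tmul_mul_tmul,
              ← hc1 k a ha b hb, ← TensorProduct.sub_tmul] at this
end

section
/- Let (g,A) be a compatible pair of type 2 over a field k of characteristic 0, i.e. g ≠ A and g + g² = A. Then for every associative k-algebra F one has (g,A)(F) = F ⊗ g + [F,F] ⊗ A + F·[F,F] ⊗ [A,A]. -/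
open Submodule TensorProduct

variable (K : Type*) [Field K]

section helpers
variable {K}

theorem br_span {R : Type*} [NonUnitalRing R] [Module K R] [SMulCommClass K R R]
    [IsScalarTower K R R] (S : Set R) (T : Submodule K R)
    (h : ∀ x ∈ S, ∀ y ∈ S, x * y - y * x ∈ T) :
    ∀ x ∈ span K S, ∀ y ∈ span K S, x * y - y * x ∈ T := by
  have h1 : ∀ x ∈ S, ∀ y ∈ span K S, x * y - y * x ∈ T := by
    intro x hx y hy
    have : span K S ≤ T.comap (LinearMap.mulLeft K x - LinearMap.mulRight K x) :=
      span_le.2 fun y hy => by simpa using h x hx y hy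
    simpa using this hy
  intro x hx y hy
  have : span K S ≤ T.comap (LinearMap.mulRight K y - LinearMap.mulLeft K y) :=
    span_le.2 fun x hx => by simpa using h1 x hx y hy
  simpa using this hx

theorem tm_left {F A : Type*} [AddCommGroup F] [Module K F] [AddCommGroup A] [Module K A]
    (S : Set F) (T : Submodule K (F ⊗[K] A)) (a : A) (h : ∀ f ∈ S, f ⊗ₜ[K] a ∈ T) :
    ∀ f ∈ span K S, f ⊗ₜ[K] a ∈ T := by
  intro f hf
  have : span K S ≤ T.comap ((TensorProduct.mk K F A).flip a) :=
    span_le.2 fun y hy => by simpa using h y hy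
  simpa using this hf

theorem tm_right {F A : Type*} [AddCommGroup F] [Module K F] [AddCommGroup A] [Module K A]
    (S : Set A) (T : Submodule K (F ⊗[K] A)) (f : F) (h : ∀ a ∈ S, f ⊗ₜ[K] a ∈ T) :
    ∀ a ∈ span K S, f ⊗ₜ[K] a ∈ T := by
  intro a ha
  have : span K S ≤ T.comap (TensorProduct.mk K F A f) :=
    span_le.2 fun y hy => by simpa using h y hy
  simpa using this ha

variable {F : Type*} [NonUnitalRing F] [Module K F] [SMulCommClass K F F] [IsScalarTower K F F]

variable (K F) in
def II : Submodule K F :=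
  bSpan K (⊤ : Submodule K F) ⊤ ⊔ pSpan K (⊤ : Submodule K F) (bSpan K ⊤ ⊤)

theorem br_mem (a b : F) : a * b - b * a ∈ bSpan K (⊤ : Submodule K F) ⊤ :=
  subset_span ⟨a, trivial, b, trivial, rfl⟩

theorem pr_mem (a c : F) (hc : c ∈ bSpan K (⊤ : Submodule K F) ⊤) :
    a * c ∈ pSpan K (⊤ : Submodule K F) (bSpan K ⊤ ⊤) :=
  subset_span ⟨a, trivial, c, hc, rfl⟩

theorem II_left (f h : F) (hh : h ∈ II K F) : f * h ∈ II K F := by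
  have : II K F ≤ (II K F).comap (LinearMap.mulLeft K f) := by
    refine sup_le (fun c hc => mem_sup_right (pr_mem f c hc)) (span_le.2 ?_)
    rintro _ ⟨a, -, c, hc, rfl⟩
    have := pr_mem (f * a) c hc
    rw [mul_assoc] at this
    exact mem_sup_right this
  exact this hh

theorem II_right (f h : F) (hh : h ∈ II K F) : h * f ∈ II K F := by
  have e : h * f = f * h + (h * f - f * h) := by abel
  rw [e]
  exact add_mem (II_left f h hh) (mem_sup_left (br_mem h f))

end helpers

/-- for a compatible pair of type 2,
`(g,A)(F) = F ⊗ g + [F,F] ⊗ A + F·[F,F] ⊗ [A,A]`. -/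
theorem statement6 {K : Type*} [Field K] [CharZero K]
    {F : Type*} [NonUnitalRing F] [Module K F] [SMulCommClass K F F] [IsScalarTower K F F]
    {A : Type*} [Ring A] [Algebra K A]
    (g : Submodule K A) (hg : ∀ x ∈ g, ∀ y ∈ g, x * y - y * x ∈ g)
    (hne : g ≠ ⊤) (htype2 : g ⊔ pSpan K g g = ⊤) :
    currentLie K (F := F) g =
      tSpan K (⊤ : Submodule K F) g ⊔
        tSpan K (bSpan K (⊤ : Submodule K F) ⊤) (⊤ : Submodule K A) ⊔
        tSpan K (pSpan K (⊤ : Submodule K F) (bSpan K ⊤ ⊤))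
          (bSpan K (⊤ : Submodule K A) ⊤) := by
  have br_eq : ∀ (f f' : F) (x y : A), (f ⊗ₜ[K] x) * (f' ⊗ₜ[K] y) - (f' ⊗ₜ[K] y) * (f ⊗ₜ[K] x)
      = (f * f' - f' * f) ⊗ₜ[K] (x * y) + (f' * f) ⊗ₜ[K] (x * y - y * x) := by
    intro f f' x y
    simp only [Algebra.TensorProduct.tmul_mul_tmul, TensorProduct.sub_tmul, TensorProduct.tmul_sub]
    abel
  apply le_antisymm
  · set R := tSpan K (⊤ : Submodule K F) g ⊔
        tSpan K (bSpan K (⊤ : Submodule K F) ⊤) (⊤ : Submodule K A) ⊔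
        tSpan K (pSpan K (⊤ : Submodule K F) (bSpan K ⊤ ⊤))
          (bSpan K (⊤ : Submodule K A) ⊤) with hR
    have h1 : ∀ (f : F), ∀ x ∈ g, f ⊗ₜ[K] x ∈ R := fun f x hx =>
      mem_sup_left (mem_sup_left (subset_span ⟨f, trivial, x, hx, rfl⟩))
    have h2 : ∀ c ∈ bSpan K (⊤ : Submodule K F) ⊤, ∀ a : A, c ⊗ₜ[K] a ∈ R := fun c hc a =>
      mem_sup_left (mem_sup_right (subset_span ⟨c, hc, a, trivial, rfl⟩))
    have h3 : ∀ h ∈ II K F, ∀ x y : A, h ⊗ₜ[K] (x * y - y * x) ∈ R := by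
      intro h hh x y
      obtain ⟨c, hc, p, hp, rfl⟩ := mem_sup.1 hh
      rw [TensorProduct.add_tmul]
      exact add_mem (h2 c hc _) (mem_sup_right (subset_span ⟨p, hp, _, br_mem x y, rfl⟩))
    have hG : R ≤ span K {z | ∃ f : F, ∃ x : A, (x ∈ g ∨ f ∈ II K F) ∧ z = f ⊗ₜ[K] x} := by
      refine sup_le (sup_le ?_ ?_) ?_ <;> refine span_mono ?_ <;> rintro _ ⟨f, hf, x, hx, rfl⟩
      · exact ⟨f, x, Or.inl hx, rfl⟩
      · exact ⟨f, x, Or.inr (mem_sup_left hf), rfl⟩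
      · exact ⟨f, x, Or.inr (mem_sup_right hf), rfl⟩
    refine sInf_le ⟨le_sup_left.trans le_sup_left, fun x hx y hy => ?_⟩
    refine br_span _ R ?_ x (hG hx) y (hG hy)
    rintro _ ⟨f, x, hfx, rfl⟩ _ ⟨f', y, hfy, rfl⟩
    rw [br_eq]
    refine add_mem (h2 _ (br_mem f f') _) ?_
    rcases hfx with hx | hf
    · rcases hfy with hy | hf'
      · exact h1 _ _ (hg x hx y hy)
      · exact h3 _ (II_right f f' hf') x y
    · exact h3 _ (II_left f' f hf) x y
  · refine le_sInf ?_
    rintro T ⟨hT, hbr⟩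
    have h1 : ∀ (f : F), ∀ x ∈ g, f ⊗ₜ[K] x ∈ T := fun f x hx =>
      hT (subset_span ⟨f, trivial, x, hx, rfl⟩)
    have h2 : ∀ c ∈ bSpan K (⊤ : Submodule K F) ⊤, ∀ a : A, c ⊗ₜ[K] a ∈ T := by
      intro c hc a
      have ha : a ∈ g ⊔ pSpan K g g := htype2 ▸ trivial
      obtain ⟨x, hx, p, hp, rfl⟩ := mem_sup.1 ha
      rw [TensorProduct.tmul_add]
      refine add_mem (h1 c x hx) (tm_right _ T c ?_ p hp)
      rintro _ ⟨y, hy, z, hz, rfl⟩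
      refine tm_left _ T _ ?_ c hc
      rintro _ ⟨f, -, f', -, rfl⟩
      have := hbr _ (h1 f y hy) _ (h1 f' z hz)
      rw [br_eq] at this
      exact (add_mem_cancel_right (h1 _ _ (hg y hy z hz))).1 this
    have h3 : ∀ (f : F), ∀ c ∈ bSpan K (⊤ : Submodule K F) ⊤, ∀ x ∈ g, ∀ a : A,
        (f * c) ⊗ₜ[K] (x * a - a * x) ∈ T := by
      intro f c hc x hx a
      have := hbr _ (h1 f x hx) _ (h2 c hc a)
      rw [br_eq] at this
      have h4 := (add_mem_cancel_left (h2 _ (br_mem f c) _)).1 this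
      have e : f * c = c * f + (f * c - c * f) := by abel
      rw [e, TensorProduct.add_tmul]
      exact add_mem h4 (h2 _ (br_mem f c) _)
    refine sup_le (sup_le hT ?_) ?_
    · refine span_le.2 ?_
      rintro _ ⟨c, hc, a, -, rfl⟩
      exact h2 c hc a
    · refine span_le.2 ?_
      rintro _ ⟨h, hh, b, hb, rfl⟩
      refine tm_right _ T h ?_ b hb
      rintro _ ⟨a, -, a', -, rfl⟩
      refine tm_left _ T _ ?_ h hh
      rintro _ ⟨f, -, c, hc, rfl⟩
      have ha : a ∈ g ⊔ pSpan K g g := htype2 ▸ trivial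
      obtain ⟨x, hx, p, hp, rfl⟩ := mem_sup.1 ha
      have e : (x + p) * a' - a' * (x + p) = (x * a' - a' * x) + (p * a' - a' * p) := by
        noncomm_ring
      rw [e, TensorProduct.tmul_add]
      refine add_mem (h3 f c hc x hx a') ?_
      have : pSpan K g g ≤ T.comap ((TensorProduct.mk K F A (f * c)).comp
          (LinearMap.mulRight K a' - LinearMap.mulLeft K a')) := by
        refine span_le.2 ?_
        rintro _ ⟨y, hy, z, hz, rfl⟩
        have e : (y * z) * a' - a' * (y * z)
            = (y * (z * a') - (z * a') * y) + (z * (a' * y) - (a' * y) * z) := by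
          noncomm_ring
        have h5 := add_mem (h3 f c hc y hy (z * a')) (h3 f c hc z hz (a' * y))
        rw [← TensorProduct.tmul_add, ← e] at h5
        simpa using h5
      simpa using this hp
end

section
/- Let V be a finite-dimensional vector space over a field k of characteristic 0 with dim V > 1, and let sl(V) ⊆ End(V) be the subspace of traceless endomorphisms. Then the compatible pair (sl(V), End(V)) is of type 2 (i.e. sl(V) ≠ End(V) and sl(V) + sl(V)² = End(V)), and for every associative k-algebra F one has (sl(V), End(V))(F) = [F,F] ⊗ 1 + F ⊗ sl(V); equivalently, (sl(V), End(V))(F) is the set of all X ∈ F ⊗ End(V) whose trace lies in [F,F], where Tr : F ⊗ End(V) → F is the F-linear extension of the ordinary trace End(V) → k. -/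
open Submodule TensorProduct

variable (K : Type*) [Field K]

theorem aux_h {K : Type*} [Field K] [CharZero K]
    {V : Type*} [AddCommGroup V] [Module K V] [FiniteDimensional K V]
    (hdim : 1 < Module.finrank K V) :
    ∃ h : Module.End K V, LinearMap.trace K V h = 0 ∧ LinearMap.trace K V (h * h) = 2 := by
  classical
  let b := Module.finBasis K V
  let i : Fin (Module.finrank K V) := ⟨0, by omega⟩
  let j : Fin (Module.finrank K V) := ⟨1, hdim⟩
  have hij : i ≠ j := by simp [i, j, Fin.ext_iff]
  let M : Matrix (Fin (Module.finrank K V)) (Fin (Module.finrank K V)) K :=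
    Matrix.single i i 1 - Matrix.single j j 1
  refine ⟨Matrix.toLin b b M, ?_, ?_⟩
  · rw [Matrix.trace_toLin_eq]
    simp [M, Matrix.trace_sub]
  · rw [Module.End.mul_eq_comp, ← Matrix.toLin_mul, Matrix.trace_toLin_eq]
    have : M * M = Matrix.single i i 1 + Matrix.single j j 1 := by
      simp [M, mul_sub, sub_mul, hij, hij.symm]
    rw [this, Matrix.trace_add]
    simp; norm_num

theorem aux_tr {K : Type*} [Field K]
    {F : Type*} [NonUnitalRing F] [Module K F] [SMulCommClass K F F] [IsScalarTower K F F]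
    {V : Type*} [AddCommGroup V] [Module K V] [FiniteDimensional K V]
    (x y : F ⊗[K] Module.End K V) :
    ((TensorProduct.rid K F).toLinearMap ∘ₗ
            LinearMap.lTensor F (LinearMap.trace K V)) (x * y - y * x) ∈
          bSpan K (⊤ : Submodule K F) ⊤ := by
  induction x using TensorProduct.induction_on with
  | zero => simp
  | add x₁ x₂ h₁ h₂ =>
    have : (x₁ + x₂) * y - y * (x₁ + x₂) = (x₁ * y - y * x₁) + (x₂ * y - y * x₂) := by
      rw [add_mul, mul_add]; abel
    rw [this, map_add]
    exact add_mem h₁ h₂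
  | tmul f a =>
    induction y using TensorProduct.induction_on with
    | zero => simp
    | add x₁ x₂ h₁ h₂ =>
      have : (f ⊗ₜ[K] a) * (x₁ + x₂) - (x₁ + x₂) * (f ⊗ₜ[K] a)
        = ((f ⊗ₜ[K] a) * x₁ - x₁ * (f ⊗ₜ[K] a)) + ((f ⊗ₜ[K] a) * x₂ - x₂ * (f ⊗ₜ[K] a)) := by
        rw [add_mul, mul_add]; abel
      rw [this, map_add]
      exact add_mem h₁ h₂
    | tmul f' a' =>
      rw [Algebra.TensorProduct.tmul_mul_tmul, Algebra.TensorProduct.tmul_mul_tmul, map_sub]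
      simp only [LinearMap.comp_apply, LinearMap.lTensor_tmul, LinearEquiv.coe_coe,
        TensorProduct.rid_tmul]
      rw [LinearMap.trace_mul_comm K a' a, ← smul_sub]
      exact Submodule.smul_mem _ _ (Submodule.subset_span ⟨f, trivial, f', trivial, rfl⟩)

theorem aux_dec {K : Type*} [Field K] [CharZero K]
    {F : Type*} [NonUnitalRing F] [Module K F] [SMulCommClass K F F] [IsScalarTower K F F]
    {V : Type*} [AddCommGroup V] [Module K V] [FiniteDimensional K V]
    (hdim : 1 < Module.finrank K V) (X : F ⊗[K] Module.End K V) :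
    X - (((TensorProduct.rid K F).toLinearMap ∘ₗ
            LinearMap.lTensor F (LinearMap.trace K V)) X) ⊗ₜ[K]
              ((Module.finrank K V : K)⁻¹ • (1 : Module.End K V)) ∈
      tSpan K (⊤ : Submodule K F) (LinearMap.ker (LinearMap.trace K V)) := by
  have hn : (Module.finrank K V : K) ≠ 0 := by
    exact_mod_cast (by omega : Module.finrank K V ≠ 0)
  induction X using TensorProduct.induction_on with
  | zero => simp
  | add x₁ x₂ h₁ h₂ =>
    rw [map_add, TensorProduct.add_tmul, add_sub_add_comm]
    exact add_mem h₁ h₂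
  | tmul f a =>
    simp only [LinearMap.comp_apply, LinearMap.lTensor_tmul, LinearEquiv.coe_coe,
        TensorProduct.rid_tmul]
    rw [TensorProduct.smul_tmul, ← TensorProduct.tmul_sub]
    refine Submodule.subset_span ⟨f, trivial, _, ?_, rfl⟩
    simp [LinearMap.mem_ker, hn]

theorem aux_lie_s7 {K : Type*} [Field K]
    {R : Type*} [NonUnitalRing R] [Module K R] (S : Submodule K R) :
    S ≤ lieGen K S ∧ ∀ x ∈ lieGen K S, ∀ y ∈ lieGen K S, x * y - y * x ∈ lieGen K S := by
  refine ⟨le_sInf fun T hT => hT.1, fun x hx y hy => ?_⟩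
  simp only [lieGen, Submodule.mem_sInf] at *
  exact fun T hT => hT.2 x (hx T hT) y (hy T hT)

/-- the pair `(sl(V), End(V))` is of type 2, and
`(sl(V), End(V))(F) = [F,F] ⊗ 1 + F ⊗ sl(V)`; equivalently, `(sl(V), End(V))(F)`
consists of the `X ∈ F ⊗ End(V)` whose trace lies in `[F,F]`. -/
theorem statement7 {K : Type*} [Field K] [CharZero K]
    {F : Type*} [NonUnitalRing F] [Module K F] [SMulCommClass K F F] [IsScalarTower K F F]
    {V : Type*} [AddCommGroup V] [Module K V] [FiniteDimensional K V]
    (hdim : 1 < Module.finrank K V) :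
    (LinearMap.ker (LinearMap.trace K V) ≠ (⊤ : Submodule K (Module.End K V)) ∧
      LinearMap.ker (LinearMap.trace K V) ⊔
        pSpan K (LinearMap.ker (LinearMap.trace K V)) (LinearMap.ker (LinearMap.trace K V)) =
          (⊤ : Submodule K (Module.End K V))) ∧
    currentLie K (F := F) (LinearMap.ker (LinearMap.trace K V)) =
      tSpan K (bSpan K (⊤ : Submodule K F) ⊤)
          (Submodule.span K {(1 : Module.End K V)}) ⊔
        tSpan K (⊤ : Submodule K F) (LinearMap.ker (LinearMap.trace K V)) ∧
    ∀ X : F ⊗[K] Module.End K V,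
      X ∈ currentLie K (F := F) (LinearMap.ker (LinearMap.trace K V)) ↔
        ((TensorProduct.rid K F).toLinearMap ∘ₗ
            LinearMap.lTensor F (LinearMap.trace K V)) X ∈
          bSpan K (⊤ : Submodule K F) ⊤ := by
  obtain ⟨h, h0, h2⟩ := aux_h hdim
  have hn : (Module.finrank K V : K) ≠ 0 := by
    exact_mod_cast (by omega : Module.finrank K V ≠ 0)
  have A : currentLie K (F := F) (LinearMap.ker (LinearMap.trace K V)) ≤
      (bSpan K (⊤ : Submodule K F) ⊤).comap ((TensorProduct.rid K F).toLinearMap ∘ₗ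
            LinearMap.lTensor F (LinearMap.trace K V)) := by
    refine sInf_le ⟨Submodule.span_le.2 ?_, fun x _ y _ => aux_tr x y⟩
    rintro _ ⟨f, -, a, ha, rfl⟩
    have ha' : LinearMap.trace K V a = 0 := ha
    simp [ha']
  have B : (bSpan K (⊤ : Submodule K F) ⊤).comap ((TensorProduct.rid K F).toLinearMap ∘ₗ
            LinearMap.lTensor F (LinearMap.trace K V)) ≤
      tSpan K (bSpan K (⊤ : Submodule K F) ⊤)
          (Submodule.span K {(1 : Module.End K V)}) ⊔
        tSpan K (⊤ : Submodule K F) (LinearMap.ker (LinearMap.trace K V)) := by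
    intro X hX
    rw [← add_sub_cancel ((((TensorProduct.rid K F).toLinearMap ∘ₗ
            LinearMap.lTensor F (LinearMap.trace K V)) X) ⊗ₜ[K]
              ((Module.finrank K V : K)⁻¹ • (1 : Module.End K V))) X]
    refine Submodule.add_mem_sup (Submodule.subset_span ⟨_, hX, _, ?_, rfl⟩) (aux_dec hdim X)
    exact Submodule.smul_mem _ _ (Submodule.mem_span_singleton_self _)
  have C : tSpan K (bSpan K (⊤ : Submodule K F) ⊤)
          (Submodule.span K {(1 : Module.End K V)}) ⊔
        tSpan K (⊤ : Submodule K F) (LinearMap.ker (LinearMap.trace K V)) ≤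
      currentLie K (F := F) (LinearMap.ker (LinearMap.trace K V)) := by
    obtain ⟨L1, L2⟩ := aux_lie_s7 (K := K)
      (tSpan K (⊤ : Submodule K F) (LinearMap.ker (LinearMap.trace K V)))
    refine sup_le (Submodule.span_le.2 ?_) L1
    rintro _ ⟨f, hf, a, ha, rfl⟩
    obtain ⟨c, rfl⟩ := Submodule.mem_span_singleton.1 ha
    rw [TensorProduct.tmul_smul]
    refine Submodule.smul_mem _ _ ?_
    induction hf using Submodule.span_induction with
    | zero => simp
    | add x y _ _ hx hy => rw [TensorProduct.add_tmul]; exact add_mem hx hy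
    | smul r x _ hx => rw [← TensorProduct.smul_tmul']; exact Submodule.smul_mem _ _ hx
    | mem x hx =>
      obtain ⟨p, -, q, -, rfl⟩ := hx
      have e1 := L2 (p ⊗ₜ h) (L1 (Submodule.subset_span ⟨p, trivial, h, h0, rfl⟩))
        (q ⊗ₜ h) (L1 (Submodule.subset_span ⟨q, trivial, h, h0, rfl⟩))
      rw [Algebra.TensorProduct.tmul_mul_tmul, Algebra.TensorProduct.tmul_mul_tmul,
        ← TensorProduct.sub_tmul] at e1
      have e2 := L1 (Submodule.subset_span ⟨p * q - q * p, trivial,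
        1 - ((Module.finrank K V : K) / 2) • (h * h), by
          simp [LinearMap.mem_ker, h2], rfl⟩)
      have e3 := add_mem e2 (Submodule.smul_mem _ ((Module.finrank K V : K) / 2) e1)
      rw [← TensorProduct.tmul_smul, ← TensorProduct.tmul_add, sub_add_cancel] at e3
      exact e3
  refine ⟨⟨?_, ?_⟩, le_antisymm (A.trans B) C, fun X => ⟨fun hX => A hX, fun hX => C (B hX)⟩⟩
  · intro ht
    have : (1 : Module.End K V) ∈ LinearMap.ker (LinearMap.trace K V) := by rw [ht]; trivial
    rw [LinearMap.mem_ker, LinearMap.trace_one] at this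
    exact hn this
  · rw [eq_top_iff]
    intro a _
    rw [← sub_add_cancel a ((LinearMap.trace K V a / 2) • (h * h))]
    refine Submodule.add_mem_sup ?_
      (Submodule.smul_mem _ _ (Submodule.subset_span ⟨h, h0, h, h0, rfl⟩))
    simp [LinearMap.mem_ker, h2]
end

section
/- Let k be a field of characteristic 0 and V a finite-dimensional k-vector space equipped with a nondegenerate bilinear form Φ which is either symmetric with dim V ≥ 3, or skew-symmetric with dim V = 2m ≥ 2. Let o(Φ) = {M ∈ End(V) : Φ(M(u),v) + Φ(u,M(v)) = 0 for all u,v ∈ V}. Then o(Φ) + o(Φ)² = End(V) (so the compatible pair (o(Φ), End(V)) is of type 2), and for every associative k-algebra F one has (o(Φ), End(V))(F) = F ⊗ o(Φ) + [F,F] ⊗ 1 + (F·[F,F] + [F,F]) ⊗ sl(V), where sl(V) is the subspace of traceless endomorphisms of V. -/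
open Submodule TensorProduct

variable (K : Type*) [Field K]

/-- existence of dual bases -/
theorem s8_dual {K : Type*} [Field K] {V : Type*} [AddCommGroup V] [Module K V]
    [FiniteDimensional K V] (Φ : V →ₗ[K] V →ₗ[K] K)
    (hΦnd : ∀ x : V, (∀ y : V, Φ x y = 0) → x = 0) (ε : K) (hs : ∀ u v, Φ u v = ε * Φ v u) :
    ∃ e d : Fin (Module.finrank K V) → V,
      (∀ u, ∑ i, Φ u (d i) • e i = u) ∧ (∀ z, ∑ i, Φ (e i) z • d i = z) ∧
      (∑ i, Φ (e i) (d i) = (Module.finrank K V : K)) := by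
  have hB : LinearMap.BilinForm.Nondegenerate Φ := by
    refine ⟨hΦnd, fun y hy => hΦnd y fun x => ?_⟩
    rw [hs, hy, mul_zero]
  let b := Module.finBasis K V
  let c := LinearMap.BilinForm.dualBasis Φ hB b
  have h1 : ∀ i j, Φ (c i) (b j) = if j = i then 1 else 0 :=
    LinearMap.BilinForm.apply_dualBasis_left hB b
  refine ⟨c, b, fun u => ?_, fun z => ?_, ?_⟩
  · conv_rhs => rw [← c.sum_repr u]
    refine Finset.sum_congr rfl fun i _ => ?_
    rw [LinearMap.BilinForm.dualBasis_repr_apply]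
  · conv_rhs => rw [← b.sum_repr z]
    refine Finset.sum_congr rfl fun i _ => ?_
    congr 1
    conv_lhs => rw [← b.sum_repr z]
    simp only [map_sum, map_smul, h1]
    simp
  · simp [h1]

/-- rank one operators -/
def s8E {K : Type*} [Field K] {V : Type*} [AddCommGroup V] [Module K V]
    (Φ : V →ₗ[K] V →ₗ[K] K) : V →ₗ[K] V →ₗ[K] Module.End K V :=
  LinearMap.mk₂ K (fun u v => (Φ v).smulRight u)
    (by intros; ext; simp) (by intros; ext; exact smul_comm _ _ _) (by intros; ext; simp [add_smul])
    (by intros; ext; simp [mul_smul])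

theorem s8E_apply {K : Type*} [Field K] {V : Type*} [AddCommGroup V] [Module K V]
    (Φ : V →ₗ[K] V →ₗ[K] K) (u v x : V) : s8E Φ u v x = Φ v x • u := rfl

theorem s8E_mul {K : Type*} [Field K] {V : Type*} [AddCommGroup V] [Module K V]
    (Φ : V →ₗ[K] V →ₗ[K] K) (u v w z : V) :
    s8E Φ u v * s8E Φ w z = Φ v w • s8E Φ u z := by
  ext x
  simp [s8E_apply, smul_smul, mul_comm]

theorem s8E_trace {K : Type*} [Field K] {V : Type*} [AddCommGroup V] [Module K V]
    [FiniteDimensional K V]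
    (Φ : V →ₗ[K] V →ₗ[K] K) (u v : V) : LinearMap.trace K V (s8E Φ u v) = Φ v u :=
  LinearMap.trace_smulRight _ _

theorem s8E_sum {K : Type*} [Field K] {V : Type*} [AddCommGroup V] [Module K V]
    (Φ : V →ₗ[K] V →ₗ[K] K) (ε : K) (hs : ∀ u v, Φ u v = ε * Φ v u) {n : ℕ}
    (e d : Fin n → V) (h1 : ∀ u, ∑ i, Φ u (d i) • e i = u) (M : Module.End K V) :
    M = ∑ i, ε • s8E Φ (M (e i)) (d i) := by
  ext x
  conv_lhs => rw [← h1 x]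
  simp [s8E_apply, smul_smul, ← hs]

theorem s8_contr {K : Type*} [Field K] {V : Type*} [AddCommGroup V] [Module K V]
    (Φ : V →ₗ[K] V →ₗ[K] K) {n : ℕ}
    (e d : Fin n → V) (h1 : ∀ u, ∑ i, Φ u (d i) • e i = u) (h2 : ∀ z, ∑ i, Φ (e i) z • d i = z)
    (h3 : ∑ i, Φ (e i) (d i) = (n : K)) {X : Type*} [AddCommGroup X] [Module K X]
    (q : V →ₗ[K] V →ₗ[K] X) (a1 a2 a3 : K)
    (h : ∀ u v w z, Φ v w • q u z + a1 • Φ u w • q v z + a2 • Φ u z • q v w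
      + a3 • Φ v z • q u w = 0) (u z : V) :
    ((n : K) + a1 + a3) • q u z + a2 • Φ u z • ∑ i, q (e i) (d i) = 0 := by
  have h0 := Finset.sum_congr (rfl : (Finset.univ : Finset (Fin n)) = _)
    fun i _ => h u (e i) (d i) z
  simp only [Finset.sum_add_distrib, ← Finset.smul_sum, ← Finset.sum_smul, h3,
    Finset.sum_const_zero] at h0
  have e1 : ∑ i, Φ u (d i) • q (e i) z = q u z := by
    conv_rhs => rw [← h1 u]
    simp
  have e2 : ∑ i, Φ (e i) z • q u (d i) = q u z := by
    conv_rhs => rw [← h2 z]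
    simp
  rw [e1, e2] at h0
  rw [← h0]
  module

theorem s8_mem_g {K : Type*} [Field K] {V : Type*} [AddCommGroup V] [Module K V]
    (Φ : V →ₗ[K] V →ₗ[K] K) (ε : K) (hs : ∀ u v, Φ u v = ε * Φ v u) (hε : ε * ε = 1)
    (g : Submodule K (Module.End K V))
    (hg : ∀ M : Module.End K V, M ∈ g ↔ ∀ u v : V, Φ (M u) v + Φ u (M v) = 0) (u v : V) :
    s8E Φ u v - ε • s8E Φ v u ∈ g := by
  rw [hg]
  intro x y
  simp [s8E_apply]
  rw [hs x u, hs x v]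
  linear_combination (- Φ v x * Φ u y) * hε

/-- (A) -/
theorem s8_A {K : Type*} [Field K] [CharZero K] {V : Type*} [AddCommGroup V] [Module K V]
    [FiniteDimensional K V]
    (Φ : V →ₗ[K] V →ₗ[K] K) (hΦnd : ∀ x : V, (∀ y : V, Φ x y = 0) → x = 0)
    (ε : K) (hs : ∀ u v, Φ u v = ε * Φ v u) (hε : ε * ε = 1)
    (hn : (Module.finrank K V : K) - 2 * ε ≠ 0) (hn' : (Module.finrank K V : K) - ε ≠ 0)
    (g : Submodule K (Module.End K V))
    (hg : ∀ M : Module.End K V, M ∈ g ↔ ∀ u v : V, Φ (M u) v + Φ u (M v) = 0)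
    (P : Submodule K (Module.End K V)) (hP : g ≤ P)
    (hP2 : ∀ a ∈ g, ∀ b ∈ g, a * b + b * a ∈ P) : P = ⊤ := by
  obtain ⟨e, d, h1, h2, h3⟩ := s8_dual Φ hΦnd ε hs
  let q : V →ₗ[K] V →ₗ[K] (Module.End K V ⧸ P) := (s8E Φ).compr₂ P.mkQ
  have hq : ∀ u v, q u v = P.mkQ (s8E Φ u v) := fun u v => rfl
  have hsym : ∀ u v, q u v = ε • q v u := by
    intro u v
    rw [hq, hq, ← map_smul, ← sub_eq_zero, ← map_sub]
    exact (Submodule.Quotient.mk_eq_zero P).2 (hP (s8_mem_g Φ ε hs hε g hg u v))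
  have key : ∀ u v w z, Φ v w • q u z + (-ε) • Φ u w • q v z + (1 : K) • Φ u z • q v w
      + (-ε) • Φ v z • q u w = 0 := by
    intro u v w z
    have := (Submodule.Quotient.mk_eq_zero P).2
      (hP2 _ (s8_mem_g Φ ε hs hε g hg u v) _ (s8_mem_g Φ ε hs hε g hg w z))
    rw [← Submodule.mkQ_apply] at this
    simp only [sub_mul, mul_sub, smul_mul_assoc, mul_smul_comm, s8E_mul, map_add, map_sub,
      map_smul, ← hq] at this
    rw [hsym w v, hsym w u, hsym z v, hsym z u, hs z u, hs z v, hs w u, hs w v] at this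
    have h2 : (2 : K) • (Φ v w • q u z + (-ε) • Φ u w • q v z + (1 : K) • Φ u z • q v w
      + (-ε) • Φ v z • q u w) = 0 := by
      rw [← this]
      match_scalars
      · linear_combination (- Φ v w * (ε * ε + 1)) * hε
      · linear_combination (Φ u w * ε) * hε
      · linear_combination (- 2 * Φ u z) * hε
      · linear_combination (Φ v z * ε) * hε
    exact (smul_eq_zero.1 h2).resolve_left two_ne_zero
  have c := s8_contr Φ e d h1 h2 h3 q _ _ _ key
  have hQ : ∑ i, q (e i) (d i) = 0 := by
    have h0 := Finset.sum_congr (rfl : (Finset.univ : Finset (Fin (Module.finrank K V))) = _)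
      fun i _ => c (e i) (d i)
    simp only [Finset.sum_add_distrib, ← Finset.smul_sum, ← Finset.sum_smul, h3,
      Finset.sum_const_zero] at h0
    have : ((2 : K) * ((Module.finrank K V : K) - ε)) • ∑ i, q (e i) (d i) = 0 := by
      rw [← h0]; module
    exact (smul_eq_zero.1 this).resolve_left (mul_ne_zero two_ne_zero hn')
  have hq0 : ∀ u z, q u z = 0 := by
    intro u z
    have := c u z
    rw [hQ, smul_zero, smul_zero, add_zero] at this
    refine (smul_eq_zero.1 this).resolve_left ?_
    convert hn using 1
    ring
  rw [eq_top_iff]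
  intro M _
  rw [s8E_sum Φ ε hs e d h1 M]
  refine Submodule.sum_mem _ fun i _ => Submodule.smul_mem _ _ ?_
  exact (Submodule.Quotient.mk_eq_zero P).1 (hq0 _ _)

/-- (B) -/
theorem s8_B {K : Type*} [Field K] [CharZero K] {V : Type*} [AddCommGroup V] [Module K V]
    [FiniteDimensional K V]
    (Φ : V →ₗ[K] V →ₗ[K] K) (hΦnd : ∀ x : V, (∀ y : V, Φ x y = 0) → x = 0)
    (ε : K) (hs : ∀ u v, Φ u v = ε * Φ v u) (hε : ε * ε = 1)
    (hn : (Module.finrank K V : K) ≠ 0)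
    (g : Submodule K (Module.End K V))
    (hg : ∀ M : Module.End K V, M ∈ g ↔ ∀ u v : V, Φ (M u) v + Φ u (M v) = 0)
    (P : Submodule K (Module.End K V)) (hP : g ≤ P)
    (hP2 : ∀ a ∈ g, ∀ x, a * x - x * a ∈ P) : LinearMap.ker (LinearMap.trace K V) ≤ P := by
  obtain ⟨e, d, h1, h2, h3⟩ := s8_dual Φ hΦnd ε hs
  let q : V →ₗ[K] V →ₗ[K] (Module.End K V ⧸ P) := (s8E Φ).compr₂ P.mkQ
  have hq : ∀ u v, q u v = P.mkQ (s8E Φ u v) := fun u v => rfl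
  have hsym : ∀ u v, q u v = ε • q v u := by
    intro u v
    rw [hq, hq, ← map_smul, ← sub_eq_zero, ← map_sub]
    exact (Submodule.Quotient.mk_eq_zero P).2 (hP (s8_mem_g Φ ε hs hε g hg u v))
  have key : ∀ u v w z, Φ v w • q u z + (-ε) • Φ u w • q v z + (-1 : K) • Φ u z • q v w
      + ε • Φ v z • q u w = 0 := by
    intro u v w z
    have := (Submodule.Quotient.mk_eq_zero P).2
      (hP2 _ (s8_mem_g Φ ε hs hε g hg u v) (s8E Φ w z))
    rw [← Submodule.mkQ_apply] at this
    simp only [sub_mul, mul_sub, smul_mul_assoc, mul_smul_comm, s8E_mul, map_add, map_sub,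
      map_smul, ← hq] at this
    rw [hsym w v, hsym w u, hs z u, hs z v] at this
    rw [← this]
    match_scalars
    · ring
    · ring
    · linear_combination (Φ u z) * hε
    · linear_combination (-Φ v z * ε) * hε
  have c := s8_contr Φ e d h1 h2 h3 q _ _ _ key
  intro M hM
  have hM' : LinearMap.trace K V M = 0 := hM
  rw [s8E_sum Φ ε hs e d h1 M, map_sum] at hM'
  simp only [map_smul, s8E_trace] at hM'
  refine (Submodule.Quotient.mk_eq_zero P).1 ?_
  rw [← Submodule.mkQ_apply]
  rw [s8E_sum Φ ε hs e d h1 M, map_sum]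
  simp only [map_smul, ← hq]
  have h0 := Finset.sum_congr (rfl : (Finset.univ : Finset (Fin (Module.finrank K V))) = _)
      fun i _ => c (M (e i)) (d i)
  simp only [Finset.sum_add_distrib, ← Finset.smul_sum, ← Finset.sum_smul,
      Finset.sum_const_zero] at h0
  have hz : ∑ i, Φ (M (e i)) (d i) = 0 := by
    rw [← hM']
    exact Finset.sum_congr rfl fun i _ => hs _ _
  rw [hz, zero_smul, smul_zero, add_zero] at h0
  rw [← Finset.smul_sum, (smul_eq_zero.1 h0).resolve_left (by simpa using hn), smul_zero]

theorem s8_comm {K : Type*} [Field K] [CharZero K]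
    {F : Type*} [NonUnitalRing F] [Module K F] [SMulCommClass K F F] [IsScalarTower K F F]
    {A : Type*} [Ring A] [Algebra K A] (f f' : F) (a b : A) :
    (f ⊗ₜ[K] a) * (f' ⊗ₜ[K] b) - (f' ⊗ₜ[K] b) * (f ⊗ₜ[K] a) =
      (2⁻¹ : K) • ((f * f' - f' * f) ⊗ₜ[K] (a * b + b * a)) +
      (2⁻¹ : K) • ((f * f' + f' * f) ⊗ₜ[K] (a * b - b * a)) := by
  simp only [Algebra.TensorProduct.tmul_mul_tmul, TensorProduct.sub_tmul, TensorProduct.add_tmul,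
    TensorProduct.tmul_add, TensorProduct.tmul_sub]
  match_scalars <;> norm_num

/-- to check closure under commutators it is enough to look at generators -/
theorem s8_closed {K : Type*} [Field K] {R : Type*} [NonUnitalRing R] [Module K R]
    [SMulCommClass K R R] [IsScalarTower K R R] (G : Set R) (T : Submodule K R)
    (h : ∀ x ∈ G, ∀ y ∈ G, x * y - y * x ∈ T) :
    ∀ x ∈ span K G, ∀ y ∈ span K G, x * y - y * x ∈ T := by
  intro x hx y hy
  induction hx, hy using Submodule.span_induction₂ with
  | mem_mem x y hx hy => exact h x hx y hy
  | zero_left y hy => simp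
  | zero_right x hx => simp
  | add_left x y z hx hy hz h1 h2 =>
    convert T.add_mem h1 h2 using 1; rw [add_mul, mul_add]; abel
  | add_right x y z hx hy hz h1 h2 =>
    convert T.add_mem h1 h2 using 1; rw [add_mul, mul_add]; abel
  | smul_left r x y hx hy h1 =>
    convert T.smul_mem r h1 using 1; rw [smul_mul_assoc, mul_smul_comm, smul_sub]
  | smul_right r x y hx hy h1 =>
    convert T.smul_mem r h1 using 1; rw [smul_mul_assoc, mul_smul_comm, smul_sub]

/-- for a nondegenerate symmetric (dim ≥ 3) or skew-symmetric
(dim = 2m ≥ 2) bilinear form `Φ`, one has `o(Φ) + o(Φ)² = End(V)` and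
`(o(Φ), End(V))(F) = F ⊗ o(Φ) + [F,F] ⊗ 1 + (F·[F,F] + [F,F]) ⊗ sl(V)`. -/
theorem statement8 {K : Type*} [Field K] [CharZero K]
    {F : Type*} [NonUnitalRing F] [Module K F] [SMulCommClass K F F] [IsScalarTower K F F]
    {V : Type*} [AddCommGroup V] [Module K V] [FiniteDimensional K V]
    (Φ : V →ₗ[K] V →ₗ[K] K) (hΦnd : ∀ x : V, (∀ y : V, Φ x y = 0) → x = 0)
    (hΦ : ((∀ u v : V, Φ u v = Φ v u) ∧ 3 ≤ Module.finrank K V) ∨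
          ((∀ u v : V, Φ u v = - Φ v u) ∧ ∃ m : ℕ, 1 ≤ m ∧ Module.finrank K V = 2 * m))
    (g : Submodule K (Module.End K V))
    (hg : ∀ M : Module.End K V, M ∈ g ↔ ∀ u v : V, Φ (M u) v + Φ u (M v) = 0) :
    g ⊔ pSpan K g g = (⊤ : Submodule K (Module.End K V)) ∧
    currentLie K (F := F) g =
      tSpan K (⊤ : Submodule K F) g ⊔
        tSpan K (bSpan K (⊤ : Submodule K F) ⊤)
          (Submodule.span K {(1 : Module.End K V)}) ⊔
        tSpan K (pSpan K (⊤ : Submodule K F) (bSpan K ⊤ ⊤) ⊔ bSpan K (⊤ : Submodule K F) ⊤)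
          (LinearMap.ker (LinearMap.trace K V)) := by
  obtain ⟨ε, hs, hε, hn, hn', hn0⟩ : ∃ ε : K, (∀ u v, Φ u v = ε * Φ v u) ∧ ε * ε = 1 ∧
      (Module.finrank K V : K) - 2 * ε ≠ 0 ∧ (Module.finrank K V : K) - ε ≠ 0 ∧
      (Module.finrank K V : K) ≠ 0 := by
    rcases hΦ with ⟨h, h3⟩ | ⟨h, m, hm, h3⟩
    · refine ⟨1, by simpa using h, by simp, ?_, ?_, ?_⟩
      · rw [mul_one, sub_ne_zero]
        exact_mod_cast (by omega : Module.finrank K V ≠ 2)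
      · rw [sub_ne_zero]
        exact_mod_cast (by omega : Module.finrank K V ≠ 1)
      · exact_mod_cast (by omega : Module.finrank K V ≠ 0)
    · refine ⟨-1, by simpa using h, by simp, ?_, ?_, ?_⟩
      · have : ((Module.finrank K V + 2 : ℕ) : K) ≠ 0 := by
          exact_mod_cast (by omega : Module.finrank K V + 2 ≠ 0)
        intro h0; apply this; push_cast; linear_combination h0
      · have : ((Module.finrank K V + 1 : ℕ) : K) ≠ 0 := by
          exact_mod_cast (by omega : Module.finrank K V + 1 ≠ 0)
        intro h0; apply this; push_cast; linear_combination h0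
      · exact_mod_cast (by omega : Module.finrank K V ≠ 0)
  have hbr : ∀ a ∈ g, ∀ b ∈ g, a * b - b * a ∈ g := by
    intro a ha b hb
    rw [hg] at ha hb ⊢
    intro u v
    simp only [LinearMap.sub_apply, Module.End.mul_apply, map_sub]
    linear_combination ha (b u) v - hb (a u) v + ha u (b v) - hb u (a v)
  have hA := s8_A Φ hΦnd ε hs hε hn hn' g hg
  have hB := s8_B Φ hΦnd ε hs hε hn0 g hg
  refine ⟨hA _ le_sup_left fun a ha b hb => le_sup_right (a := g) ?_, ?_⟩
  · exact add_mem (subset_span ⟨a, ha, b, hb, rfl⟩) (subset_span ⟨b, hb, a, ha, rfl⟩)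
  have tmem : ∀ (S : Submodule K F) (T : Submodule K (Module.End K V)) f a, f ∈ S → a ∈ T →
      f ⊗ₜ[K] a ∈ tSpan K S T := fun S T f a hf ha => subset_span ⟨f, hf, a, ha, rfl⟩
  have cmem : ∀ f f' : F, f * f' - f' * f ∈ bSpan K (⊤ : Submodule K F) ⊤ :=
    fun f f' => subset_span ⟨f, mem_top, f', mem_top, rfl⟩
  set C := bSpan K (⊤ : Submodule K F) ⊤ with hC
  set W := pSpan K (⊤ : Submodule K F) C ⊔ C with hW
  have hCW : C ≤ W := le_sup_right
  have hFC : ∀ f, ∀ c ∈ C, f * c ∈ W := fun f c hc =>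
    le_sup_left (b := C) (subset_span ⟨f, mem_top, c, hc, rfl⟩)
  have hFW : ∀ f, ∀ w ∈ W, f * w ∈ W := by
    intro f w hw
    have : W ≤ W.comap (LinearMap.mulLeft K f) := by
      refine sup_le (span_le.2 ?_) fun c hc => hFC f c hc
      rintro _ ⟨a, -, c, hc, rfl⟩
      change f * (a * c) ∈ W
      rw [← mul_assoc]
      exact hFC _ c hc
    exact this hw
  have hWF : ∀ f, ∀ w ∈ W, w * f ∈ W := by
    intro f w hw
    have := add_mem (hFW f w hw) (hCW (cmem w f))
    simpa using this
  apply le_antisymm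
  · set T := tSpan K (⊤ : Submodule K F) g ⊔ tSpan K C (span K {(1 : Module.End K V)}) ⊔
      tSpan K W (LinearMap.ker (LinearMap.trace K V)) with hT
    have hT1 : tSpan K (⊤ : Submodule K F) g ≤ T := le_sup_left.trans le_sup_left
    have hT2 : tSpan K C (span K {(1 : Module.End K V)}) ≤ T := le_sup_right.trans le_sup_left
    have hT3 : tSpan K W (LinearMap.ker (LinearMap.trace K V)) ≤ T := le_sup_right
    have hCT : ∀ c ∈ C, ∀ x : Module.End K V, c ⊗ₜ[K] x ∈ T := by
      intro c hc x
      set t : K := LinearMap.trace K V x / Module.finrank K V with ht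
      have hx : x = t • 1 + (x - t • 1) := by abel
      rw [hx, TensorProduct.tmul_add]
      refine add_mem (hT2 (tmem _ _ _ _ hc (smul_mem _ _ (mem_span_singleton_self _))))
        (hT3 (tmem _ _ _ _ (hCW hc) ?_))
      rw [LinearMap.mem_ker, map_sub, map_smul, LinearMap.trace_one, ht, smul_eq_mul,
        div_mul_cancel₀ _ hn0, sub_self]
    have main : ∀ f f' : F, ∀ a b : Module.End K V,
        ((f * f' + f' * f) ⊗ₜ[K] (a * b - b * a) ∈ T) →
        (f ⊗ₜ[K] a) * (f' ⊗ₜ[K] b) - (f' ⊗ₜ[K] b) * (f ⊗ₜ[K] a) ∈ T := by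
      intro f f' a b h
      rw [s8_comm]
      exact add_mem (smul_mem _ _ (hCT _ (cmem f f') _)) (smul_mem _ _ h)
    have trc : ∀ a b : Module.End K V, a * b - b * a ∈ LinearMap.ker (LinearMap.trace K V) := by
      intro a b
      rw [LinearMap.mem_ker, map_sub, LinearMap.trace_mul_comm, sub_self]
    have wl : ∀ f f' : F, ∀ a b : Module.End K V, f ∈ W → 
        (f * f' + f' * f) ⊗ₜ[K] (a * b - b * a) ∈ T := fun f f' a b hf =>
      hT3 (tmem _ _ _ _ (add_mem (hWF _ _ hf) (hFW _ _ hf)) (trc a b))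
    have wr : ∀ f f' : F, ∀ a b : Module.End K V, f' ∈ W → 
        (f * f' + f' * f) ⊗ₜ[K] (a * b - b * a) ∈ T := fun f f' a b hf =>
      hT3 (tmem _ _ _ _ (add_mem (hFW _ _ hf) (hWF _ _ hf)) (trc a b))
    refine sInf_le ⟨hT1, ?_⟩
    have hTs : T = span K ({z | ∃ f : F, ∃ a : Module.End K V, (a ∈ g ∨ f ∈ W) ∧ z = f ⊗ₜ[K] a ∧
        f ⊗ₜ[K] a ∈ T}) := by
      apply le_antisymm
      · refine sup_le (sup_le (span_mono ?_) (span_mono ?_)) (span_mono ?_)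
        · rintro _ ⟨f, hf, a, ha, rfl⟩
          exact ⟨f, a, Or.inl ha, rfl, hT1 (tmem _ _ _ _ hf ha)⟩
        · rintro _ ⟨f, hf, a, ha, rfl⟩
          exact ⟨f, a, Or.inr (hCW hf), rfl, hT2 (tmem _ _ _ _ hf ha)⟩
        · rintro _ ⟨f, hf, a, ha, rfl⟩
          exact ⟨f, a, Or.inr hf, rfl, hT3 (tmem _ _ _ _ hf ha)⟩
      · refine span_le.2 ?_
        rintro _ ⟨f, a, -, rfl, h⟩
        exact h
    intro x hx y hy
    rw [hTs] at hx hy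
    refine s8_closed _ T ?_ x hx y hy
    rintro _ ⟨f, a, h1, rfl, -⟩ _ ⟨f', b, h2, rfl, -⟩
    apply main
    rcases h1 with h1 | h1
    · rcases h2 with h2 | h2
      · exact hT1 (tmem _ _ _ _ mem_top (hbr a h1 b h2))
      · exact wr _ _ _ _ h2
    · exact wl _ _ _ _ h1
  · refine le_sInf ?_
    rintro L ⟨hL, hLie⟩
    have hgL : ∀ f : F, ∀ a ∈ g, f ⊗ₜ[K] a ∈ L := fun f a ha => hL (tmem _ _ _ _ mem_top ha)
    have hCL : ∀ c ∈ C, ∀ x : Module.End K V, c ⊗ₜ[K] x ∈ L := by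
      intro c hc x
      have hCle : C ≤ L.comap ((TensorProduct.mk K F (Module.End K V)).flip x) := by
        refine span_le.2 ?_
        rintro _ ⟨f, -, f', -, rfl⟩
        change (f * f' - f' * f) ⊗ₜ[K] x ∈ L
        have hP := hA (L.comap (TensorProduct.mk K F (Module.End K V) (f * f' - f' * f)))
          (fun a ha => hgL _ a ha) ?_
        · have : x ∈ (⊤ : Submodule K (Module.End K V)) := mem_top
          rw [← hP] at this
          exact this
        · intro a ha b hb
          change (f * f' - f' * f) ⊗ₜ[K] (a * b + b * a) ∈ L
          have h := hLie _ (hgL f a ha) _ (hgL f' b hb)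
          rw [s8_comm] at h
          have h' := L.smul_mem (2 : K) ((L.add_mem_iff_left
            (L.smul_mem _ (hgL _ _ (hbr a ha b hb)))).1 h)
          rwa [smul_smul, mul_inv_cancel₀ two_ne_zero, one_smul] at h'
      exact hCle hc
    refine sup_le (sup_le hL (span_le.2 ?_)) (span_le.2 ?_)
    · rintro _ ⟨c, hc, x, -, rfl⟩
      exact hCL c hc x
    · rintro _ ⟨w, hw, x, hx, rfl⟩
      have hWle : W ≤ L.comap ((TensorProduct.mk K F (Module.End K V)).flip x) := by
        refine sup_le (span_le.2 ?_) fun c hc => hCL c hc x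
        rintro _ ⟨f, -, c, hc, rfl⟩
        change (f * c) ⊗ₜ[K] x ∈ L
        refine hB (L.comap (TensorProduct.mk K F (Module.End K V) (f * c)))
          (fun a ha => hgL _ a ha) ?_ hx
        intro a ha y
        change (f * c) ⊗ₜ[K] (a * y - y * a) ∈ L
        have h := hLie _ (hgL f a ha) _ (hCL c hc y)
        rw [s8_comm] at h
        have h' := L.smul_mem (2 : K) ((L.add_mem_iff_right
            (L.smul_mem _ (hCL _ (cmem f c) _))).1 h)
        rw [smul_smul, mul_inv_cancel₀ two_ne_zero, one_smul] at h'
        have h2 := L.smul_mem (2⁻¹ : K) (L.add_mem h' (hCL _ (cmem f c) (a * y - y * a)))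
        rw [← TensorProduct.add_tmul] at h2
        have h3 : f * c + c * f + (f * c - c * f) = (2 : K) • (f * c) := by
          rw [two_smul]; abel
        rwa [h3, TensorProduct.smul_tmul', smul_smul, inv_mul_cancel₀ two_ne_zero, one_smul] at h2
      exact hWle hw
end

section
/- Let (g,A) be a compatible pair over a field k of characteristic 0 and F an associative k-algebra. Then the upper bound tilde(g,A)(F) = F ⊗ g + Σ_{k≥1} ( I_k(F) ⊗ [g, g^{k+1}] + [F, I_{k−1}(F)] ⊗ g^{k+1} ) is a Lie subalgebra of F ⊗ A under the commutator bracket. -/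
open Submodule TensorProduct

variable (K : Type*) [Field K]

section helpers

variable {R : Type*} [NonUnitalRing R] [Module K R]

theorem aux_br_le [SMulCommClass K R R] [IsScalarTower K R R] (S T P : Submodule K R)
    (h : ∀ a ∈ S, ∀ b ∈ T, a * b - b * a ∈ P) : bSpan K S T ≤ P := by
  unfold bSpan
  rw [Submodule.span_le]
  rintro x ⟨a, ha, b, hb, rfl⟩
  exact h a ha b hb

theorem aux_br_mem (S T : Submodule K R) {a b : R} (ha : a ∈ S) (hb : b ∈ T) :
    a * b - b * a ∈ bSpan K S T := Submodule.subset_span ⟨a, ha, b, hb, rfl⟩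

theorem aux_p_mem (S T : Submodule K R) {a b : R} (ha : a ∈ S) (hb : b ∈ T) :
    a * b ∈ pSpan K S T := Submodule.subset_span ⟨a, ha, b, hb, rfl⟩

theorem aux_Ik_c {k : ℕ} {x : R} (h : x ∈ cSp K ⊤ k) : x ∈ Ik K R k := by
  unfold Ik
  exact Submodule.mem_iSup_of_mem 0 (by simpa [IklS] using h)

theorem aux_Ik_cmul [SMulCommClass K R R] [IsScalarTower K R R] {i j : ℕ} {x y : R}
    (hx : x ∈ cSp K ⊤ i) (hy : y ∈ Ik K R j) : x * y ∈ Ik K R (i + j) := by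
  have : Ik K R j ≤ (Ik K R (i + j)).comap (LinearMap.mulLeft K x) := by
    conv_lhs => unfold Ik
    refine iSup_le fun l z hz => ?_
    rw [Submodule.mem_comap, LinearMap.mulLeft_apply]
    unfold Ik
    refine Submodule.mem_iSup_of_mem (l + 1) ?_
    simp only [IklS]
    have h1 : x * z ∈ pSpan K (cSp K ⊤ i) (IklS K (⊤ : Submodule K R) (l + 1) (i + j - i)) := by
      rw [Nat.add_sub_cancel_left]
      exact aux_p_mem K _ _ hx hz
    exact Finset.single_le_sum (f := fun i' => pSpan K (cSp K ⊤ i')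
      (IklS K (⊤ : Submodule K R) (l + 1) (i + j - i'))) (fun _ _ => bot_le)
      (Finset.mem_range.2 (by omega : i < i + j + 1)) h1
  exact this hy

theorem aux_Ik_ind (P : ℕ → Submodule K R) (h0 : ∀ k, ∀ x ∈ cSp K ⊤ k, x ∈ P k)
    (h1 : ∀ i j, ∀ x ∈ cSp K ⊤ i, ∀ y ∈ Ik K R j, y ∈ P j → x * y ∈ P (i + j)) (k : ℕ) :
    Ik K R k ≤ P k := by
  conv_lhs => unfold Ik
  refine iSup_le fun l => ?_
  induction l generalizing k with
  | zero => intro x hx; exact h0 k x (by simpa [IklS] using hx)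
  | succ l ih =>
    simp only [IklS]
    refine Finset.sum_induction _ (fun S => S ≤ P k) (fun a b ha hb => sup_le ha hb) bot_le ?_
    intro i hi
    unfold pSpan
    rw [Submodule.span_le]
    rintro x ⟨a, ha, b, hb, rfl⟩
    have := h1 i (k - i) a ha b
      (by unfold Ik; exact Submodule.mem_iSup_of_mem l hb) (ih _ hb)
    rw [Finset.mem_range] at hi
    rwa [show i + (k - i) = k by omega] at this

variable [SMulCommClass K R R] [IsScalarTower K R R]

theorem aux_Ik_mul {i j : ℕ} {x y : R}
    (hx : x ∈ Ik K R i) (hy : y ∈ Ik K R j) : x * y ∈ Ik K R (i + j) := by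
  refine aux_Ik_ind K (fun k => (Ik K R (k + j)).comap (LinearMap.mulRight K y)) ?_ ?_ i hx
  · intro k x hx
    exact aux_Ik_cmul K hx hy
  · intro i k a ha b hb hP
    simp only [Submodule.mem_comap, LinearMap.mulRight_apply] at hP ⊢
    rw [mul_assoc, add_assoc]
    exact aux_Ik_cmul K ha hP

/-- `x ↦ f x - x f` as a linear map. -/
def auxAd (f : R) : R →ₗ[K] R := LinearMap.mulLeft K f - LinearMap.mulRight K f

theorem auxAd_apply (f x : R) : auxAd K f x = f * x - x * f := rfl

theorem aux_Ik_D {k : ℕ} (f : R) {x : R} (hx : x ∈ Ik K R k) :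
    f * x - x * f ∈ Ik K R (k + 1) := by
  refine aux_Ik_ind K (fun k => (Ik K R (k + 1)).comap (auxAd K f)) ?_ ?_ k hx
  · intro k x hx
    exact aux_Ik_c K (aux_br_mem K _ _ trivial hx)
  · intro i j a ha b hb hP
    simp only [Submodule.mem_comap, auxAd_apply] at hP ⊢
    have e : f * (a * b) - a * b * f = (f * a - a * f) * b + a * (f * b - b * f) := by
      simp only [mul_sub, sub_mul, mul_assoc]; abel
    rw [e]
    refine add_mem ?_ ?_
    · have := aux_Ik_cmul K (i := i + 1) (aux_br_mem K ⊤ _ (a := f) trivial ha) hb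
      rwa [show i + 1 + j = i + j + 1 by omega] at this
    · rw [add_assoc]
      exact aux_Ik_cmul K ha hP

theorem aux_brF_le (k : ℕ) : bSpan K (⊤ : Submodule K R) (Ik K R k) ≤ Ik K R (k + 1) :=
  aux_br_le K _ _ _ fun a _ _ hb => aux_Ik_D K a hb

theorem aux_c_br (k : ℕ) : ∀ (n : ℕ) (x y : R), x ∈ cSp K ⊤ k → y ∈ Ik K R n →
    x * y - y * x ∈ bSpan K (⊤ : Submodule K R) (Ik K R (k + n)) := by
  induction k with
  | zero => intro n x y _ hy; rw [zero_add]; exact aux_br_mem K _ _ trivial hy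
  | succ k ih =>
    intro n x y hx hy
    have : cSp K (⊤ : Submodule K R) (k + 1) ≤
        (bSpan K (⊤ : Submodule K R) (Ik K R (k + 1 + n))).comap (auxAd K y) := by
      refine aux_br_le K _ _ _ fun f _ z hz => ?_
      rw [Submodule.mem_comap, auxAd_apply]
      have e : y * (f * z - z * f) - (f * z - z * f) * y =
          (z * (f * y - y * f) - (f * y - y * f) * z) -
            (f * (z * y - y * z) - (z * y - y * z) * f) := by
        simp only [mul_sub, sub_mul, mul_assoc]; abel
      rw [e]
      refine sub_mem ?_ ?_
      · have := ih (n + 1) z _ hz (aux_Ik_D K f hy)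
        rwa [show k + (n + 1) = k + 1 + n by omega] at this
      · refine aux_br_mem K _ _ trivial ?_
        have := aux_brF_le K _ (ih n z y hz hy)
        rwa [show k + n + 1 = k + 1 + n by omega] at this
    have h := this hx
    rw [Submodule.mem_comap, auxAd_apply] at h
    rw [← neg_sub]
    exact neg_mem h

theorem aux_Ik_br {k n : ℕ} {x y : R} (hx : x ∈ Ik K R k) (hy : y ∈ Ik K R n) :
    x * y - y * x ∈ bSpan K (⊤ : Submodule K R) (Ik K R (k + n)) := by
  have key := aux_Ik_ind K (fun k => ⨅ n : ℕ, ⨅ y : Ik K R n,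
    (bSpan K (⊤ : Submodule K R) (Ik K R (k + n))).comap (auxAd K (y : R))) ?_ ?_ k hx
  · simp only [Submodule.mem_iInf, Submodule.mem_comap, auxAd_apply] at key
    rw [← neg_sub]
    exact neg_mem (key n ⟨y, hy⟩)
  · intro k x hx
    simp only [Submodule.mem_iInf, Submodule.mem_comap, auxAd_apply]
    intro n y
    rw [← neg_sub]
    exact neg_mem (aux_c_br K k n x y hx y.2)
  · intro i j a ha b hb hP
    simp only [Submodule.mem_iInf, Submodule.mem_comap, auxAd_apply] at hP ⊢
    intro n y
    have e : (y : R) * (a * b) - a * b * y =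
        ((y * a) * b - b * (y * a)) - (a * (b * y) - (b * y) * a) := by
      simp only [mul_assoc]; abel
    rw [e]
    refine sub_mem ?_ ?_
    · have := hP (n + i) ⟨_, aux_Ik_mul K y.2 (aux_Ik_c K ha)⟩
      rwa [show j + (n + i) = i + j + n by omega] at this
    · have := aux_c_br K i (j + n) a _ ha (aux_Ik_mul K hb y.2)
      rwa [← add_assoc] at this

theorem aux_g_mul (g : Submodule K R) (m : ℕ) : ∀ (n : ℕ) (x y : R), x ∈ gPow K g (m + 1) →
    y ∈ gPow K g (n + 1) → x * y ∈ gPow K g (m + n + 2) := by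
  induction m with
  | zero =>
    intro n x y hx hy
    rw [zero_add]
    exact aux_p_mem K _ _ (by simpa [gPow] using hx) hy
  | succ m ih =>
    intro n x y hx hy
    have : gPow K g (m + 1 + 1) ≤
        (gPow K g (m + 1 + n + 2)).comap (LinearMap.mulRight K y) := by
      change pSpan K g (gPow K g (m + 1)) ≤ _
      unfold pSpan
      rw [Submodule.span_le]
      rintro x ⟨a, ha, b, hb, rfl⟩
      change a * b * y ∈ gPow K g (m + 1 + n + 2)
      rw [mul_assoc, show m + 1 + n + 2 = (m + n + 1) + 2 by omega]
      exact aux_p_mem K _ _ ha (ih n b y hb hy)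
    exact this hx

theorem aux_g_br (g : Submodule K R) (m : ℕ) : ∀ (n : ℕ) (x y : R), x ∈ gPow K g (m + 1) →
    y ∈ gPow K g (n + 1) → x * y - y * x ∈ bSpan K g (gPow K g (m + n + 1)) := by
  induction m with
  | zero =>
    intro n x y hx hy
    rw [zero_add]
    exact aux_br_mem K _ _ (by simpa [gPow] using hx) hy
  | succ m ih =>
    intro n x y hx hy
    have : gPow K g (m + 1 + 1) ≤
        (bSpan K g (gPow K g (m + 1 + n + 1))).comap (auxAd K y) := by
      change pSpan K g (gPow K g (m + 1)) ≤ _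
      unfold pSpan
      rw [Submodule.span_le]
      rintro x ⟨a, ha, b, hb, rfl⟩
      change y * (a * b) - a * b * y ∈ bSpan K g (gPow K g (m + 1 + n + 1))
      have e : y * (a * b) - a * b * y =
          -(b * (y * a) - (y * a) * b) - (a * (b * y) - (b * y) * a) := by
        simp only [mul_assoc]; abel
      rw [e]
      refine sub_mem (neg_mem ?_) ?_
      · have := ih (n + 1) b (y * a) hb
          (aux_g_mul K g n 0 y a hy (by simpa [gPow] using ha))
        rwa [show m + (n + 1) + 1 = m + 1 + n + 1 by omega] at this
      · have := aux_g_mul K g m n b y hb hy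
        rw [show m + n + 2 = m + 1 + n + 1 by omega] at this
        exact aux_br_mem K _ _ ha this
    have h := this hx
    rw [Submodule.mem_comap, auxAd_apply] at h
    rw [← neg_sub]
    exact neg_mem h

theorem aux_g_D (g : Submodule K R) (hg : ∀ x ∈ g, ∀ y ∈ g, x * y - y * x ∈ g) (n : ℕ) :
    bSpan K g (gPow K g (n + 1)) ≤ gPow K g (n + 1) := by
  induction n with
  | zero => exact aux_br_le K _ _ _ (by simpa [gPow] using hg)
  | succ n ih =>
    refine aux_br_le K _ _ _ fun f hf x hx => ?_
    have : gPow K g (n + 1 + 1) ≤ (gPow K g (n + 1 + 1)).comap (auxAd K f) := by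
      conv_lhs => change pSpan K g (gPow K g (n + 1))
      unfold pSpan
      rw [Submodule.span_le]
      rintro x ⟨a, ha, b, hb, rfl⟩
      change f * (a * b) - a * b * f ∈ pSpan K g (gPow K g (n + 1))
      have e : f * (a * b) - a * b * f = (f * a - a * f) * b + a * (f * b - b * f) := by
        simp only [mul_sub, sub_mul, mul_assoc]; abel
      rw [e]
      exact add_mem (aux_p_mem K _ _ (hg f hf a ha) hb)
        (aux_p_mem K _ _ ha (ih (aux_br_mem K _ _ hf hb)))
    exact this hx

end helpers

section helpers2

theorem aux_t_mono {F A : Type*} [AddCommGroup F] [Module K F] [AddCommGroup A] [Module K A]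
    {S S' : Submodule K F} {T T' : Submodule K A} (h : S ≤ S') (h' : T ≤ T') :
    tSpan K S T ≤ tSpan K S' T' := by
  unfold tSpan
  refine Submodule.span_mono ?_
  rintro z ⟨f, hf, a, ha, rfl⟩
  exact ⟨f, h hf, a, h' ha, rfl⟩

theorem aux_t_mem {F A : Type*} [AddCommGroup F] [Module K F] [AddCommGroup A] [Module K A]
    {S : Submodule K F} {T : Submodule K A} {f : F} {a : A} (h : f ∈ S) (h' : a ∈ T) :
    f ⊗ₜ[K] a ∈ tSpan K S T := Submodule.subset_span ⟨f, h, a, h', rfl⟩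

theorem aux_main_s9 {F : Type*} [NonUnitalRing F] [Module K F] [SMulCommClass K F F]
    [IsScalarTower K F F] {A : Type*} [Ring A] [Algebra K A] (g : Submodule K A)
    (T : Submodule K (F ⊗[K] A))
    (h1 : ∀ m, tSpan K (Ik K F m) (bSpan K g (gPow K g (m + 1))) ≤ T)
    (h2 : ∀ m, tSpan K (bSpan K (⊤ : Submodule K F) (Ik K F m)) (gPow K g (m + 2)) ≤ T) :
    ∀ x ∈ ⨆ k, tSpan K (Ik K F k) (gPow K g (k + 1)),
    ∀ y ∈ ⨆ k, tSpan K (Ik K F k) (gPow K g (k + 1)), x * y - y * x ∈ T := by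
  intro x hx y hy
  have hA : ∀ f a i j, ∀ f' a', f ∈ Ik K F i → a ∈ gPow K g (i + 1) → f' ∈ Ik K F j →
      a' ∈ gPow K g (j + 1) →
      (f ⊗ₜ[K] a) * (f' ⊗ₜ[K] a') - (f' ⊗ₜ[K] a') * (f ⊗ₜ[K] a) ∈ T := by
    intro f a i j f' a' hf ha hf' ha'
    have e : (f ⊗ₜ[K] a) * (f' ⊗ₜ[K] a') - (f' ⊗ₜ[K] a') * (f ⊗ₜ[K] a) =
        (f * f' - f' * f) ⊗ₜ[K] (a * a') + (f' * f) ⊗ₜ[K] (a * a' - a' * a) := by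
      simp only [Algebra.TensorProduct.tmul_mul_tmul, TensorProduct.sub_tmul,
        TensorProduct.tmul_sub]
      abel
    rw [e]
    refine add_mem (h2 (i + j) (aux_t_mem K (aux_Ik_br K hf hf') (aux_g_mul K g i j a a' ha ha')))
      (h1 (i + j) (aux_t_mem K ?_ (aux_g_br K g i j a a' ha ha')))
    rw [add_comm]
    exact aux_Ik_mul K hf' hf
  have hB : ∀ f a i, f ∈ Ik K F i → a ∈ gPow K g (i + 1) →
      (f ⊗ₜ[K] a) * y - y * (f ⊗ₜ[K] a) ∈ T := by
    intro f a i hf ha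
    have : ⨆ k, tSpan K (Ik K F k) (gPow K g (k + 1)) ≤ T.comap (auxAd K (f ⊗ₜ[K] a)) := by
      refine iSup_le fun k => ?_
      unfold tSpan
      rw [Submodule.span_le]
      rintro z ⟨f', hf', a', ha', rfl⟩
      exact hA _ _ _ _ _ _ hf ha hf' ha'
    exact this hy
  have : ⨆ k, tSpan K (Ik K F k) (gPow K g (k + 1)) ≤ T.comap (auxAd K y) := by
    refine iSup_le fun k => ?_
    unfold tSpan
    rw [Submodule.span_le]
    rintro z ⟨f', hf', a', ha', rfl⟩
    change y * (f' ⊗ₜ[K] a') - (f' ⊗ₜ[K] a') * y ∈ T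
    rw [← neg_sub]
    exact neg_mem (hB _ _ _ hf' ha')
  rw [← neg_sub]
  exact neg_mem (this hx)

end helpers2

/-- the upper bound
`tilde(g,A)(F) = F ⊗ g + Σ_{k ≥ 1} ( I_k(F) ⊗ [g, g^{k+1}] + [F, I_{k-1}(F)] ⊗ g^{k+1} )`
is a Lie subalgebra of `F ⊗ A` (i.e. is closed under the commutator bracket). -/
theorem statement9 {K : Type*} [Field K] [CharZero K]
    {F : Type*} [NonUnitalRing F] [Module K F] [SMulCommClass K F F] [IsScalarTower K F F]
    {A : Type*} [Ring A] [Algebra K A]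
    (g : Submodule K A) (hg : ∀ x ∈ g, ∀ y ∈ g, x * y - y * x ∈ g) :
    ∀ x ∈ tSpan K (⊤ : Submodule K F) g ⊔
        ⨆ k : ℕ, (tSpan K (Ik K F (k + 1)) (bSpan K g (gPow K g (k + 2))) ⊔
          tSpan K (bSpan K (⊤ : Submodule K F) (Ik K F k)) (gPow K g (k + 2))),
      ∀ y ∈ tSpan K (⊤ : Submodule K F) g ⊔
        ⨆ k : ℕ, (tSpan K (Ik K F (k + 1)) (bSpan K g (gPow K g (k + 2))) ⊔
          tSpan K (bSpan K (⊤ : Submodule K F) (Ik K F k)) (gPow K g (k + 2))),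
        x * y - y * x ∈ tSpan K (⊤ : Submodule K F) g ⊔
          ⨆ k : ℕ, (tSpan K (Ik K F (k + 1)) (bSpan K g (gPow K g (k + 2))) ⊔
            tSpan K (bSpan K (⊤ : Submodule K F) (Ik K F k)) (gPow K g (k + 2))) := by
  have hle : tSpan K (⊤ : Submodule K F) g ⊔
        ⨆ k : ℕ, (tSpan K (Ik K F (k + 1)) (bSpan K g (gPow K g (k + 2))) ⊔
          tSpan K (bSpan K (⊤ : Submodule K F) (Ik K F k)) (gPow K g (k + 2))) ≤
      ⨆ k, tSpan K (Ik K F k) (gPow K g (k + 1)) := by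
    refine sup_le ?_ (iSup_le fun k => sup_le ?_ ?_)
    · refine le_trans (aux_t_mono K ?_ ?_)
        (le_iSup (fun k => tSpan K (Ik K F k) (gPow K g (k + 1))) 0)
      · intro x _; exact aux_Ik_c K trivial
      · simp [gPow]
    · exact le_trans (aux_t_mono K le_rfl (aux_g_D K g hg (k + 1)))
        (le_iSup (fun k => tSpan K (Ik K F k) (gPow K g (k + 1))) (k + 1))
    · exact le_trans (aux_t_mono K (aux_brF_le K k) le_rfl)
        (le_iSup (fun k => tSpan K (Ik K F k) (gPow K g (k + 1))) (k + 1))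
  intro x hx y hy
  refine aux_main_s9 K g _ ?_ ?_ x (hle hx) y (hle hy)
  · intro m
    cases m with
    | zero =>
      refine le_trans (aux_t_mono K le_top ?_) le_sup_left
      simpa [gPow] using aux_g_D K g hg 0
    | succ m =>
      exact le_sup_of_le_right (le_iSup_of_le m le_sup_left)
  · intro m
    exact le_sup_of_le_right (le_iSup_of_le m le_sup_right)
end

section
/- Let (g,A) be a compatible pair over a field k of characteristic 0 and F an associative k-algebra. Then the refined upper bound overline(g,A)(F) = F ⊗ g + Σ ( I_{k₁}^{ℓ₁+1}(F)·I_{k₂}^{ℓ₂+1}(F) ⊗ [J_{ℓ₁}^{k₁+1}, J_{ℓ₂}^{k₂+1}] + [I_{k₁}^{ℓ₁+1}(F), I_{k₂}^{ℓ₂+1}(F)] ⊗ J_{ℓ₂}^{k₂+1}·J_{ℓ₁}^{k₁+1} ), where the sum is over all k₁,k₂,ℓ₁,ℓ₂ ≥ 0 and J_k^ℓ = I_k^ℓ(A,g), is a Lie subalgebra of F ⊗ A, and one has the chain of inclusions (g,A)(F) ⊆ overline(g,A)(F) ⊆ tilde(g,A)(F), where tilde(g,A)(F) = F ⊗ g +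 Σ_{k≥1} ( I_k(F) ⊗ [g, g^{k+1}] + [F, I_{k−1}(F)] ⊗ g^{k+1} ). -/
open Submodule TensorProduct

variable (K : Type*) [Field K]

variable {F A : Type*}

/-- The upper bound `tilde(g,A)(F) = F ⊗ g + Σ_{k ≥ 1} (I_k(F) ⊗ [g, g^{k+1}] +
[F, I_{k-1}(F)] ⊗ g^{k+1})`. -/
def tildeUB (K : Type*) [Field K] [NonUnitalRing F] [Module K F]
    [Ring A] [Algebra K A] (g : Submodule K A) : Submodule K (F ⊗[K] A) :=
  tSpan K (⊤ : Submodule K F) g ⊔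
    ⨆ k : ℕ, (tSpan K (Ik K F (k + 1)) (bSpan K g (gPow K g (k + 2))) ⊔
      tSpan K (bSpan K (⊤ : Submodule K F) (Ik K F k)) (gPow K g (k + 2)))

/-- The refined upper bound `overline(g,A)(F) = F ⊗ g +
Σ_{k₁,k₂,ℓ₁,ℓ₂ ≥ 0} ( I_{k₁}^{ℓ₁+1}·I_{k₂}^{ℓ₂+1} ⊗ [J_{ℓ₁}^{k₁+1}, J_{ℓ₂}^{k₂+1}]
+ [I_{k₁}^{ℓ₁+1}, I_{k₂}^{ℓ₂+1}] ⊗ J_{ℓ₂}^{k₂+1}·J_{ℓ₁}^{k₁+1} )`,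
where `J_k^ℓ = I_k^ℓ(A, g)`. -/
def refinedUB (K : Type*) [Field K] [NonUnitalRing F] [Module K F]
    [Ring A] [Algebra K A] (g : Submodule K A) : Submodule K (F ⊗[K] A) :=
  tSpan K (⊤ : Submodule K F) g ⊔
    ⨆ k₁ : ℕ, ⨆ k₂ : ℕ, ⨆ l₁ : ℕ, ⨆ l₂ : ℕ,
      (tSpan K (pSpan K (IklS K (⊤ : Submodule K F) (l₁ + 1) k₁) (IklS K ⊤ (l₂ + 1) k₂))
          (bSpan K (IklS K g (k₁ + 1) l₁) (IklS K g (k₂ + 1) l₂)) ⊔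
        tSpan K (bSpan K (IklS K (⊤ : Submodule K F) (l₁ + 1) k₁) (IklS K ⊤ (l₂ + 1) k₂))
          (pSpan K (IklS K g (k₂ + 1) l₂) (IklS K g (k₁ + 1) l₁)))

namespace S10

section gen
variable {K : Type*} [Field K] {R : Type*} [NonUnitalRing R] [Module K R]

lemma mul_mem_pSpan {S T : Submodule K R} {a b : R} (ha : a ∈ S) (hb : b ∈ T) :
    a * b ∈ pSpan K S T := Submodule.subset_span ⟨a, ha, b, hb, rfl⟩

lemma br_mem_bSpan {S T : Submodule K R} {a b : R} (ha : a ∈ S) (hb : b ∈ T) :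
    a * b - b * a ∈ bSpan K S T := Submodule.subset_span ⟨a, ha, b, hb, rfl⟩

lemma pSpan_elim {M : Type*} [AddCommGroup M] [Module K M] {S T : Submodule K R}
    (f : R →ₗ[K] M) (U : Submodule K M)
    (h : ∀ a ∈ S, ∀ b ∈ T, f (a * b) ∈ U) {x : R} (hx : x ∈ pSpan K S T) : f x ∈ U := by
  have : pSpan K S T ≤ U.comap f := by
    refine Submodule.span_le.2 ?_
    rintro _ ⟨a, ha, b, hb, rfl⟩
    exact h a ha b hb
  exact this hx

lemma bSpan_elim {M : Type*} [AddCommGroup M] [Module K M] {S T : Submodule K R}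
    (f : R →ₗ[K] M) (U : Submodule K M)
    (h : ∀ a ∈ S, ∀ b ∈ T, f (a * b - b * a) ∈ U) {x : R} (hx : x ∈ bSpan K S T) : f x ∈ U := by
  have : bSpan K S T ≤ U.comap f := by
    refine Submodule.span_le.2 ?_
    rintro _ ⟨a, ha, b, hb, rfl⟩
    exact h a ha b hb
  exact this hx

lemma pSpan_le {S T U : Submodule K R} (h : ∀ a ∈ S, ∀ b ∈ T, a * b ∈ U) :
    pSpan K S T ≤ U := fun _ hx => pSpan_elim LinearMap.id U h hx

lemma bSpan_le {S T U : Submodule K R} (h : ∀ a ∈ S, ∀ b ∈ T, a * b - b * a ∈ U) :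
    bSpan K S T ≤ U := fun _ hx => bSpan_elim LinearMap.id U h hx

lemma bSpan_mono_right {S T T' : Submodule K R} (h : T ≤ T') :
    bSpan K S T ≤ bSpan K S T' := bSpan_le fun _ ha _ hb => br_mem_bSpan ha (h hb)

lemma I_intro {S : Submodule K R} {i j k l : ℕ} {c a : R} (hk : i + j = k)
    (hc : c ∈ cSp K S i) (ha : a ∈ IklS K S (l+1) j) : c * a ∈ IklS K S (l+2) k := by
  subst hk
  have h : pSpan K (cSp K S i) (IklS K S (l+1) (i + j - i)) ≤ IklS K S (l+2) (i+j) := by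
    rw [IklS]
    exact Finset.single_le_sum (f := fun t => pSpan K (cSp K S t) (IklS K S (l+1) (i+j-t)))
      (fun _ _ => bot_le) (Finset.mem_range.2 (by omega))
  apply h
  apply mul_mem_pSpan hc
  simpa using ha

lemma I_elim {M : Type*} [AddCommGroup M] [Module K M] {S : Submodule K R} {l k : ℕ}
    (f : R →ₗ[K] M) (U : Submodule K M)
    (h : ∀ i j, i + j = k → ∀ c ∈ cSp K S i, ∀ a ∈ IklS K S (l+1) j, f (c * a) ∈ U)
    {x : R} (hx : x ∈ IklS K S (l+2) k) : f x ∈ U := by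
  have : IklS K S (l+2) k ≤ U.comap f := by
    rw [IklS]
    refine Finset.sum_induction _ (fun V => V ≤ U.comap f) (fun _ _ h1 h2 => sup_le h1 h2)
      bot_le ?_
    intro i hi y hy
    have := Finset.mem_range.1 hi
    exact pSpan_elim f U (h i (k - i) (by omega)) hy
  exact this hx

variable [SMulCommClass K R R] [IsScalarTower K R R]

def brR (K : Type*) [Field K] {R : Type*} [NonUnitalRing R] [Module K R]
    [SMulCommClass K R R] [IsScalarTower K R R] (b : R) : R →ₗ[K] R :=
  LinearMap.mulRight K b - LinearMap.mulLeft K b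

def brL (K : Type*) [Field K] {R : Type*} [NonUnitalRing R] [Module K R]
    [SMulCommClass K R R] [IsScalarTower K R R] (b : R) : R →ₗ[K] R :=
  LinearMap.mulLeft K b - LinearMap.mulRight K b

lemma brR_apply (a b : R) : brR K b a = a * b - b * a := rfl
lemma brL_apply (a b : R) : brL K b a = b * a - a * b := rfl

lemma cc {S : Submodule K R} {i j k : ℕ} {a b : R} (hk : i + j + 1 = k)
    (ha : a ∈ cSp K S i) (hb : b ∈ cSp K S j) : a * b - b * a ∈ cSp K S k := by
  induction i generalizing a b j k with
  | zero =>
    obtain rfl : k = j + 1 := by omega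
    exact br_mem_bSpan ha hb
  | succ i ih =>
    refine bSpan_elim (brR K b) _ ?_ ha
    intro f hf u hu
    obtain ⟨k, rfl⟩ : ∃ k', k = k' + 1 := ⟨k - 1, by omega⟩
    have h1 := br_mem_bSpan hf (ih (k := k) (by omega) hu hb)
    have h2 := ih (k := k + 1) (j := j + 1) (by omega) hu (br_mem_bSpan hf hb)
    rw [brR_apply]
    convert Submodule.sub_mem (cSp K S (k+1)) h1 h2 using 1
    noncomm_ring

lemma Imul {S : Submodule K R} {l k m n p q : ℕ} {a b : R} (hp : l + m + 2 = p) (hq : k + n = q)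
    (ha : a ∈ IklS K S (l+1) k) (hb : b ∈ IklS K S (m+1) n) : a * b ∈ IklS K S p q := by
  induction l generalizing a k p q with
  | zero =>
    obtain rfl : p = m + 2 := by omega
    exact I_intro hq ha hb
  | succ l ih =>
    refine I_elim (LinearMap.mulRight K b) _ ?_ ha
    intro i j hij c hc a ha
    obtain rfl : p = l + m + 1 + 2 := by omega
    have h := I_intro (l := l + m + 1) (k := q) (by omega) hc (ih (q := j + n) rfl rfl ha)
    simpa [mul_assoc] using h

lemma Ibr0 {S : Submodule K R} {k m n q : ℕ} {a b : R} (hq : k + n + 1 = q)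
    (ha : a ∈ cSp K S k) (hb : b ∈ IklS K S (m+1) n) : a * b - b * a ∈ IklS K S (m+1) q := by
  induction m generalizing b n q with
  | zero => exact cc hq ha hb
  | succ m ih =>
    refine I_elim (brL K a) _ ?_ hb
    intro i j hij c hc b hb
    have h1 := I_intro (k := q) (by omega) (cc rfl ha hc) hb
    have h2 := I_intro (k := q) (by omega) hc (ih rfl hb)
    rw [brL_apply]
    convert Submodule.add_mem _ h1 h2 using 1
    noncomm_ring

lemma Ibr {S : Submodule K R} {l k m n p q : ℕ} {a b : R} (hp : l + m + 1 = p)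
    (hq : k + n + 1 = q)
    (ha : a ∈ IklS K S (l+1) k) (hb : b ∈ IklS K S (m+1) n) :
    a * b - b * a ∈ IklS K S p q := by
  induction l generalizing a k p q with
  | zero =>
    obtain rfl : p = m + 1 := by omega
    exact Ibr0 hq ha hb
  | succ l ih =>
    refine I_elim (brR K b) _ ?_ ha
    intro i j hij c hc a ha
    obtain rfl : p = l + m + 2 := by omega
    have h1 := I_intro (l := l + m) (k := q) (by omega) hc (ih rfl rfl ha)
    have h2 := Imul (p := l + m + 2) (q := q) (by omega) (by omega) (Ibr0 rfl hc hb) ha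
    rw [brR_apply]
    convert Submodule.add_mem _ h1 h2 using 1
    noncomm_ring

lemma le_Ik (l k : ℕ) : IklS K (⊤ : Submodule K R) (l+1) k ≤ Ik K R k :=
  le_iSup (fun l => IklS K (⊤ : Submodule K R) (l+1) k) l

lemma cIk {i m n q : ℕ} {a b : R} (hq : i + n = q) (ha : a ∈ cSp K (⊤ : Submodule K R) i)
    (hb : b ∈ IklS K (⊤ : Submodule K R) (m+1) n) :
    a * b - b * a ∈ bSpan K (⊤ : Submodule K R) (Ik K R q) := by
  induction i generalizing a b n q with
  | zero =>
    obtain rfl : q = n := by omega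
    exact br_mem_bSpan ha (le_Ik _ _ hb)
  | succ i ih =>
    refine bSpan_elim (brR K b) _ ?_ ha
    intro f hf u hu
    have h1 := br_mem_bSpan hf (le_Ik m q (Ibr0 (by omega) hu hb))
    have h2 := ih (n := n + 1) (q := q) (by omega) hu (Ibr0 (k := 0) (by omega) hf hb)
    rw [brR_apply]
    convert Submodule.sub_mem _ h1 h2 using 1
    noncomm_ring

lemma IIk {l k m n q : ℕ} {a b : R} (hq : k + n = q)
    (ha : a ∈ IklS K (⊤ : Submodule K R) (l+1) k)
    (hb : b ∈ IklS K (⊤ : Submodule K R) (m+1) n) :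
    a * b - b * a ∈ bSpan K (⊤ : Submodule K R) (Ik K R q) := by
  induction l generalizing a b k m n q with
  | zero => exact cIk hq ha hb
  | succ l ih =>
    refine I_elim (brR K b) _ ?_ ha
    intro i j hij c hc a ha
    have h1 := cIk (q := q) (by omega) hc (Imul (p := l + m + 1 + 1) rfl rfl ha hb)
    have h2 := ih (q := q) (by omega) ha
      (Imul (l := m) (m := 0) (p := m + 1 + 1) (by omega) rfl hb hc)
    rw [brR_apply]
    convert Submodule.add_mem _ h1 h2 using 1
    noncomm_ring

variable {g : Submodule K R}

omit [SMulCommClass K R R] [IsScalarTower K R R] in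
lemma cSp_le (hg : ∀ x ∈ g, ∀ y ∈ g, x * y - y * x ∈ g) (i : ℕ) : cSp K g i ≤ g := by
  induction i with
  | zero => exact le_rfl
  | succ i ih => exact bSpan_le fun a ha b hb => hg a ha b (ih hb)

omit [SMulCommClass K R R] [IsScalarTower K R R] in
lemma I_le_gPow (hg : ∀ x ∈ g, ∀ y ∈ g, x * y - y * x ∈ g) (l k : ℕ) :
    IklS K g (l+1) k ≤ gPow K g (l+1) := by
  induction l generalizing k with
  | zero => exact cSp_le hg k
  | succ l ih =>
    intro x hx
    refine I_elim LinearMap.id _ ?_ hx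
    intro i j _ c hc a ha
    exact mul_mem_pSpan (cSp_le hg i hc) (ih j ha)

lemma gmul {m n p : ℕ} {a b : R} (hp : m + n + 2 = p) (ha : a ∈ gPow K g (m+1))
    (hb : b ∈ gPow K g (n+1)) : a * b ∈ gPow K g p := by
  subst hp
  induction m generalizing a with
  | zero => rw [Nat.zero_add]; exact mul_mem_pSpan ha hb
  | succ m ih =>
    refine pSpan_elim (LinearMap.mulRight K b) _ ?_ ha
    intro x hx a ha
    have h : x * (a * b) ∈ gPow K g (m + n + 1 + 2) := mul_mem_pSpan hx (ih ha)
    have e : m + 1 + n + 2 = m + n + 1 + 2 := by omega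
    rw [e]
    simpa [mul_assoc] using h

lemma gbr {m n p : ℕ} {a b : R} (hp : m + n + 1 = p) (ha : a ∈ gPow K g (m+1))
    (hb : b ∈ gPow K g (n+1)) : a * b - b * a ∈ bSpan K g (gPow K g p) := by
  induction m generalizing a b n p with
  | zero =>
    obtain rfl : p = n + 1 := by omega
    exact br_mem_bSpan ha hb
  | succ m ih =>
    refine pSpan_elim (brR K b) _ ?_ ha
    intro x hx a ha
    have h1 := br_mem_bSpan hx (gmul (p := p) (by omega) ha hb)
    have h2 := ih (n := n + 1) (p := p) (by omega) ha (gmul (n := 0) (by omega) hb hx)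
    rw [brR_apply]
    convert Submodule.add_mem _ h1 h2 using 1
    noncomm_ring

end gen

section tens
variable {K : Type*} [Field K] {F A : Type*}

lemma tmul_mem_tSpan [AddCommGroup F] [Module K F] [AddCommGroup A] [Module K A]
    {S : Submodule K F} {T : Submodule K A} {f : F} {a : A} (hf : f ∈ S) (ha : a ∈ T) :
    f ⊗ₜ[K] a ∈ tSpan K S T := Submodule.subset_span ⟨f, hf, a, ha, rfl⟩

lemma tSpan_le [AddCommGroup F] [Module K F] [AddCommGroup A] [Module K A]
    {S : Submodule K F} {T : Submodule K A} {U : Submodule K (F ⊗[K] A)}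
    (h : ∀ f ∈ S, ∀ a ∈ T, f ⊗ₜ[K] a ∈ U) : tSpan K S T ≤ U := by
  refine Submodule.span_le.2 ?_
  rintro _ ⟨f, hf, a, ha, rfl⟩
  exact h f hf a ha

lemma tSpan_mono [AddCommGroup F] [Module K F] [AddCommGroup A] [Module K A]
    {S S' : Submodule K F} {T T' : Submodule K A} (h : S ≤ S') (h' : T ≤ T') :
    tSpan K S T ≤ tSpan K S' T' :=
  tSpan_le fun _ hf _ ha => tmul_mem_tSpan (h hf) (h' ha)

variable [NonUnitalRing F] [Module K F] [SMulCommClass K F F] [IsScalarTower K F F]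
    [Ring A] [Algebra K A]

/-- The auxiliary space `Σ I_k^{l+1} ⊗ J_l^{k+1}`. -/
def PP (F : Type*) [NonUnitalRing F] [Module K F] (g : Submodule K A) :
    Submodule K (F ⊗[K] A) :=
  ⨆ k : ℕ, ⨆ l : ℕ, tSpan K (IklS K (⊤ : Submodule K F) (l+1) k) (IklS K g (k+1) l)

omit [SMulCommClass K F F] [IsScalarTower K F F] in
lemma le_PP (g : Submodule K A) (k l : ℕ) :
    tSpan K (IklS K (⊤ : Submodule K F) (l+1) k) (IklS K g (k+1) l) ≤ PP F g :=
  le_iSup₂ (f := fun k l => tSpan K (IklS K (⊤ : Submodule K F) (l+1) k) (IklS K g (k+1) l)) k l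

lemma refined_le_PP (g : Submodule K A) : refinedUB (F := F) K g ≤ PP F g := by
  refine sup_le (le_PP g 0 0) ?_
  refine iSup_le fun k₁ => iSup_le fun k₂ => iSup_le fun l₁ => iSup_le fun l₂ => sup_le ?_ ?_
  · refine le_trans (tSpan_mono ?_ ?_) (le_PP g (k₁+k₂) (l₁+l₂+1))
    · exact pSpan_le fun a ha b hb => Imul rfl rfl ha hb
    · exact bSpan_le fun a ha b hb => Ibr rfl rfl ha hb
  · refine le_trans (tSpan_mono ?_ ?_) (le_PP g (k₁+k₂+1) (l₁+l₂))
    · exact bSpan_le fun a ha b hb => Ibr rfl rfl ha hb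
    · exact pSpan_le fun a ha b hb => Imul (by omega) (by omega) ha hb

lemma PP_br (g : Submodule K A) {x y : F ⊗[K] A} (hx : x ∈ PP F g) (hy : y ∈ PP F g) :
    x * y - y * x ∈ refinedUB (F := F) K g := by
  have key : PP F g ≤ (refinedUB (F := F) K g).comap (brR K y) := by
    refine iSup_le fun k₁ => iSup_le fun l₁ => tSpan_le fun f hf a ha => ?_
    have key2 : PP F g ≤ (refinedUB (F := F) K g).comap (brL K (f ⊗ₜ[K] a)) := by
      refine iSup_le fun k₂ => iSup_le fun l₂ => tSpan_le fun f' hf' a' ha' => ?_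
      rw [Submodule.mem_comap, brL_apply, Algebra.TensorProduct.tmul_mul_tmul,
        Algebra.TensorProduct.tmul_mul_tmul]
      have e : (f * f') ⊗ₜ[K] (a * a') - (f' * f) ⊗ₜ[K] (a' * a) =
          (f * f') ⊗ₜ[K] (a * a' - a' * a) + (f * f' - f' * f) ⊗ₜ[K] (a' * a) := by
        rw [TensorProduct.tmul_sub, TensorProduct.sub_tmul]; abel
      rw [e]
      apply (le_sup_right : _ ≤ refinedUB (F := F) K g)
      apply Submodule.mem_iSup_of_mem k₁
      apply Submodule.mem_iSup_of_mem k₂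
      apply Submodule.mem_iSup_of_mem l₁
      apply Submodule.mem_iSup_of_mem l₂
      exact Submodule.add_mem_sup
        (tmul_mem_tSpan (mul_mem_pSpan hf hf') (br_mem_bSpan ha ha'))
        (tmul_mem_tSpan (br_mem_bSpan hf hf') (mul_mem_pSpan ha' ha))
    exact key2 hy
  exact key hx

lemma refined_le_tilde (g : Submodule K A) (hg : ∀ x ∈ g, ∀ y ∈ g, x * y - y * x ∈ g) :
    refinedUB (F := F) K g ≤ tildeUB (F := F) K g := by
  refine sup_le le_sup_left ?_
  refine iSup_le fun k₁ => iSup_le fun k₂ => iSup_le fun l₁ => iSup_le fun l₂ => sup_le ?_ ?_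
  · rcases Nat.eq_zero_or_pos (k₁ + k₂) with h0 | h0
    · obtain ⟨rfl, rfl⟩ : k₁ = 0 ∧ k₂ = 0 := by omega
      refine le_trans (tSpan_mono le_top ?_) le_sup_left
      exact bSpan_le fun a ha b hb => hg a (cSp_le hg _ ha) b (cSp_le hg _ hb)
    · obtain ⟨k, hk⟩ : ∃ k, k₁ + k₂ = k + 1 := ⟨k₁ + k₂ - 1, by omega⟩
      refine le_trans ?_ le_sup_right
      refine le_trans ?_ (le_iSup _ k)
      refine le_trans ?_ le_sup_left
      refine tSpan_mono ?_ ?_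
      · exact pSpan_le fun a ha b hb => le_Ik (l₁+l₂+1) (k+1) (Imul rfl hk ha hb)
      · exact bSpan_le fun a ha b hb =>
          gbr (by omega) (I_le_gPow hg _ _ ha) (I_le_gPow hg _ _ hb)
  · refine le_trans ?_ le_sup_right
    refine le_trans ?_ (le_iSup _ (k₁ + k₂))
    refine le_trans ?_ le_sup_right
    refine tSpan_mono ?_ ?_
    · exact bSpan_le fun a ha b hb => IIk rfl ha hb
    · exact pSpan_le fun a ha b hb =>
        gmul (by omega) (I_le_gPow hg _ _ ha) (I_le_gPow hg _ _ hb)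

end tens
end S10

/-- the refined upper bound `overline(g,A)(F)` is a Lie subalgebra of
`F ⊗ A` and `(g,A)(F) ⊆ overline(g,A)(F) ⊆ tilde(g,A)(F)`. -/
theorem statement10 {K : Type*} [Field K] [CharZero K]
    [NonUnitalRing F] [Module K F] [SMulCommClass K F F] [IsScalarTower K F F]
    [Ring A] [Algebra K A]
    (g : Submodule K A) (hg : ∀ x ∈ g, ∀ y ∈ g, x * y - y * x ∈ g) :
    (∀ x ∈ refinedUB (F := F) K g, ∀ y ∈ refinedUB (F := F) K g,
        x * y - y * x ∈ refinedUB (F := F) K g) ∧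
    currentLie K (F := F) g ≤ refinedUB (F := F) K g ∧
    refinedUB (F := F) K g ≤ tildeUB (F := F) K g := by
  refine ⟨fun x hx y hy => S10.PP_br g (S10.refined_le_PP g hx) (S10.refined_le_PP g hy),
    sInf_le ⟨le_sup_left, fun x hx y hy =>
      S10.PP_br g (S10.refined_le_PP g hx) (S10.refined_le_PP g hy)⟩,
    S10.refined_le_tilde g hg⟩
end

section
/- Let B be an associative algebra over a field k of characteristic 0 and S ⊆ B a subset. Then for all k, k' ≥ 0 and ℓ, ℓ' ≥ 1 one has I_k^ℓ(B,S)·I_{k'}^{ℓ'}(B,S) ⊆ I_{k+k'}^{ℓ+ℓ'}(B,S) and [I_k^ℓ(B,S), I_{k'}^{ℓ'}(B,S)] ⊆ I_{k+k'+1}^{ℓ+ℓ'−1}(B,S); in particular S^(i)·I_k^ℓ(B,S) ⊆ I_{k+i}^{ℓ+1}(B,S) and [S^(i), I_k^ℓ(B,S)] ⊆ I_{k+i+1}^ℓ(B,S). -/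
open Submodule TensorProduct

variable (K : Type*) [Field K]

section helpers

variable {K : Type*} [Field K] {B : Type*} [NonUnitalRing B] [Module K B]

theorem hp_pSpan_le {P Q T : Submodule K B} (h : ∀ a ∈ P, ∀ b ∈ Q, a * b ∈ T) :
    pSpan K P Q ≤ T := by
  refine Submodule.span_le.2 ?_
  rintro x ⟨a, ha, b, hb, rfl⟩
  exact h a ha b hb

theorem hp_bSpan_le {P Q T : Submodule K B} (h : ∀ a ∈ P, ∀ b ∈ Q, a * b - b * a ∈ T) :
    bSpan K P Q ≤ T := by
  refine Submodule.span_le.2 ?_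
  rintro x ⟨a, ha, b, hb, rfl⟩
  exact h a ha b hb

theorem hp_mem_b {P Q : Submodule K B} {a b : B} (ha : a ∈ P) (hb : b ∈ Q) :
    a * b - b * a ∈ bSpan K P Q :=
  Submodule.subset_span ⟨a, ha, b, hb, rfl⟩

theorem hp_sum (s : Finset ℕ) (f : ℕ → Submodule K B) : ∑ i ∈ s, f i = ⨆ i ∈ s, f i := by
  classical
  induction s using Finset.induction_on with
  | empty => simp
  | insert a s ha ih => rw [Finset.sum_insert ha, ih, Finset.iSup_insert]; rfl

theorem hp_I_le {S T : Submodule K B} {l k : ℕ}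
    (h : ∀ i j, i + j = k → ∀ a ∈ cSp K S i, ∀ b ∈ IklS K S (l+1) j, a * b ∈ T) :
    IklS K S (l+2) k ≤ T := by
  rw [IklS, hp_sum]
  refine iSup₂_le fun i hi => hp_pSpan_le (h i (k - i) ?_)
  have := Finset.mem_range.1 hi
  omega

theorem hp_mul {S : Submodule K B} {l i k m n : ℕ} (hl : 1 ≤ l) (hm : m = l + 1)
    (hn : n = i + k) {a b : B}
    (ha : a ∈ cSp K S i) (hb : b ∈ IklS K S l k) : a * b ∈ IklS K S m n := by
  subst hm hn
  obtain ⟨l, rfl⟩ := Nat.exists_eq_add_of_le' hl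
  rw [IklS, hp_sum]
  refine Submodule.mem_iSup_of_mem i (Submodule.mem_iSup_of_mem
    (Finset.mem_range.2 (by omega)) (Submodule.subset_span ⟨a, ha, b, ?_, rfl⟩))
  rwa [Nat.add_sub_cancel_left]

variable [SMulCommClass K B B] [IsScalarTower K B B]

theorem hp_comm {S : Submodule K B} (i : ℕ) : ∀ j, ∀ a ∈ cSp K S i, ∀ b ∈ cSp K S j,
    a * b - b * a ∈ cSp K S (i + j + 1) := by
  induction i with
  | zero =>
    intro j a ha b hb
    rw [Nat.zero_add]
    exact hp_mem_b ha hb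
  | succ i ih =>
    intro j a ha b hb
    have key : cSp K S (i+1) ≤ (cSp K S (i + 1 + j + 1)).comap
        (LinearMap.mulRight K b - LinearMap.mulLeft K b) := by
      refine hp_bSpan_le fun s hs a' ha' => ?_
      have h1 : s * (a' * b - b * a') - (a' * b - b * a') * s ∈ cSp K S (i + j + 1 + 1) :=
        hp_mem_b hs (ih j a' ha' b hb)
      have h2 := ih (j+1) a' ha' _ (hp_mem_b (Q := cSp K S j) hs hb)
      have e1 : i + j + 1 + 1 = i + 1 + j + 1 := by omega
      have e2 : i + (j + 1) + 1 = i + 1 + j + 1 := by omega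
      rw [e1] at h1
      rw [e2] at h2
      have := sub_mem h1 h2
      simp only [Submodule.mem_comap, LinearMap.sub_apply, LinearMap.mulRight_apply,
        LinearMap.mulLeft_apply]
      convert this using 1
      noncomm_ring
    simpa using key ha

theorem hp_prod {S : Submodule K B} (l : ℕ) : ∀ l' k k' m n, 1 ≤ l' → m = l + 1 + l' →
    n = k + k' → ∀ a ∈ IklS K S (l+1) k,
    ∀ b ∈ IklS K S l' k', a * b ∈ IklS K S m n := by
  induction l with
  | zero =>
    intro l' k k' m n hl' hm hn a ha b hb
    exact hp_mul hl' (by omega) hn ha hb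
  | succ l ih =>
    intro l' k k' m n hl' hm hn a ha b hb
    have key : IklS K S (l+2) k ≤ (IklS K S m n).comap (LinearMap.mulRight K b) := by
      refine hp_I_le fun i j hij x hx y hy => ?_
      simp only [Submodule.mem_comap, LinearMap.mulRight_apply]
      rw [mul_assoc]
      exact hp_mul (l := l + 1 + l') (k := j + k') (by omega) (by omega) (by omega) hx
        (ih l' j k' _ _ hl' rfl rfl y hy b hb)
    simpa using key ha

theorem hp_der {S : Submodule K B} (l : ℕ) : ∀ i k n, n = k + i + 1 → ∀ a ∈ cSp K S i,
    ∀ b ∈ IklS K S (l+1) k, a * b - b * a ∈ IklS K S (l+1) n := by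
  induction l with
  | zero =>
    intro i k n hn a ha b hb
    obtain rfl : n = i + k + 1 := by omega
    exact hp_comm i k a ha b hb
  | succ l ih =>
    intro i k n hn a ha b hb
    have key : IklS K S (l+2) k ≤ (IklS K S (l+2) n).comap
        (LinearMap.mulLeft K a - LinearMap.mulRight K a) := by
      refine hp_I_le fun p q hpq x hx y hy => ?_
      have h1 : (a * x - x * a) * y ∈ IklS K S (l+2) n :=
        hp_mul (by omega) rfl (by omega) (hp_comm i p a ha x hx) hy
      have h2 : x * (a * y - y * a) ∈ IklS K S (l+2) n :=
        hp_mul (by omega) rfl (by omega) hx (ih i q _ rfl a ha y hy)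
      have := add_mem h1 h2
      simp only [Submodule.mem_comap, LinearMap.sub_apply, LinearMap.mulRight_apply,
        LinearMap.mulLeft_apply]
      convert this using 1
      noncomm_ring
    simpa using key hb

theorem hp_brk {S : Submodule K B} (l : ℕ) : ∀ l' k k' m n, m = l + l' + 1 →
    n = k + k' + 1 → ∀ a ∈ IklS K S (l+1) k,
    ∀ b ∈ IklS K S (l'+1) k', a * b - b * a ∈ IklS K S m n := by
  induction l with
  | zero =>
    intro l' k k' m n hm hn a ha b hb
    obtain rfl : m = l' + 1 := by omega
    exact hp_der l' k k' n (by omega) a ha b hb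
  | succ l ih =>
    intro l' k k' m n hm hn a ha b hb
    have key : IklS K S (l+2) k ≤ (IklS K S m n).comap
        (LinearMap.mulRight K b - LinearMap.mulLeft K b) := by
      refine hp_I_le fun p q hpq x hx y hy => ?_
      have h1 : x * (y * b - b * y) ∈ IklS K S m n :=
        hp_mul (by omega) (by omega) (by omega) hx (ih l' q k' _ _ rfl rfl y hy b hb)
      have h2 : (x * b - b * x) * y ∈ IklS K S m n :=
        hp_prod l' (l+1) _ q m n (by omega) (by omega) (by omega) _
          (hp_der l' p k' _ rfl x hx b hb) y hy
      have := add_mem h1 h2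
      simp only [Submodule.mem_comap, LinearMap.sub_apply, LinearMap.mulRight_apply,
        LinearMap.mulLeft_apply]
      convert this using 1
      noncomm_ring
    simpa using key ha

end helpers

/-- products and commutators of the subspaces `I_k^ℓ(B, S)` for a
subset `S` of an algebra `B` (where `S^(0) = span S`). -/
theorem statement11 {K : Type*} [Field K] [CharZero K]
    {B : Type*} [NonUnitalRing B] [Module K B] [SMulCommClass K B B] [IsScalarTower K B B]
    (S : Set B) (k k' ℓ ℓ' : ℕ) (hℓ : 1 ≤ ℓ) (hℓ' : 1 ≤ ℓ') :
    pSpan K (IklS K (Submodule.span K S) ℓ k) (IklS K (Submodule.span K S) ℓ' k') ≤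
      IklS K (Submodule.span K S) (ℓ + ℓ') (k + k') ∧
    bSpan K (IklS K (Submodule.span K S) ℓ k) (IklS K (Submodule.span K S) ℓ' k') ≤
      IklS K (Submodule.span K S) (ℓ + ℓ' - 1) (k + k' + 1) ∧
    (∀ i : ℕ, pSpan K (cSp K (Submodule.span K S) i) (IklS K (Submodule.span K S) ℓ k) ≤
      IklS K (Submodule.span K S) (ℓ + 1) (k + i)) ∧
    (∀ i : ℕ, bSpan K (cSp K (Submodule.span K S) i) (IklS K (Submodule.span K S) ℓ k) ≤
      IklS K (Submodule.span K S) ℓ (k + i + 1)) := by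
  obtain ⟨l, rfl⟩ := Nat.exists_eq_add_of_le' hℓ
  obtain ⟨l', rfl⟩ := Nat.exists_eq_add_of_le' hℓ'
  refine ⟨hp_pSpan_le (hp_prod l _ _ _ _ _ hℓ' rfl rfl),
    hp_bSpan_le (hp_brk l l' _ _ _ _ (by omega) rfl),
    fun i => hp_pSpan_le fun a ha b hb => hp_mul hℓ rfl (by omega) ha hb,
    fun i => hp_bSpan_le (hp_der l i k _ rfl)⟩
end
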